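/- arXiv:2011.09401 — 4 statements merged into one kernel-verified Lean document; each statement's English description precedes it below -/
import Mathlib

section
/- Let d < 0 be a fundamental discriminant with |d| ≥ 9.8·10^18 and ω(|d|) ≤ log|d| / log log|d|. Then there exist two distinct odd primes q₁, q₂, neither dividing d, with q₁·q₂ ≡ 1 (mod 4), such that each qᵢ ≤ 1.27·log|d| and hence k := q₁·q₂ ≤ 1.62·(log|d|)². (In particular, k is the discriminant of the real quadratic field ℚ(√k).) -/
open Real
open scoped ArithmeticFunction.vonMangoldt

theorem log_factorial_eq_sum_vonMangoldt {n N : ℕ} (h : n ≤ N) :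
    log (n.factorial : ℝ) = ∑ k ∈ Finset.Ioc 0 N, Λ k * ((n / k : ℕ) : ℝ) := by
  induction n with
  | zero => simp
  | succ n ih =>
    have hdiv : (n + 1).divisors = {k ∈ Finset.Ioc 0 N | k ∣ n + 1} := by
      ext k
      simp only [Nat.mem_divisors, Finset.mem_filter, Finset.mem_Ioc]
      constructor
      · rintro ⟨hk, -⟩
        exact ⟨⟨Nat.pos_of_dvd_of_pos hk n.succ_pos, (Nat.le_of_dvd n.succ_pos hk).trans h⟩, hk⟩
      · rintro ⟨-, hk⟩
        exact ⟨hk, n.succ_ne_zero⟩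
    rw [Nat.factorial_succ, Nat.cast_mul, log_mul (by positivity) (by positivity),
      ih (by omega), ← ArithmeticFunction.vonMangoldt_sum, hdiv, Finset.sum_filter, ← Finset.sum_add_distrib]
    refine Finset.sum_congr rfl fun k _ ↦ ?_
    rw [Nat.succ_div]
    split_ifs <;> push_cast <;> ring

theorem log_factorial_combination_le_psi (N : ℕ) :
    log (N.factorial : ℝ) - log ((N / 2).factorial : ℝ) - log ((N / 3).factorial : ℝ)
      - log ((N / 5).factorial : ℝ) + log ((N / 30).factorial : ℝ) ≤ Chebyshev.psi N := by
  have hle (m : ℕ) : N / m ≤ N := Nat.div_le_self N m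
  rw [log_factorial_eq_sum_vonMangoldt le_rfl, log_factorial_eq_sum_vonMangoldt (hle 2),
    log_factorial_eq_sum_vonMangoldt (hle 3), log_factorial_eq_sum_vonMangoldt (hle 5),
    log_factorial_eq_sum_vonMangoldt (hle 30), Chebyshev.psi, Nat.floor_natCast,
    ← Finset.sum_sub_distrib, ← Finset.sum_sub_distrib, ← Finset.sum_sub_distrib,
    ← Finset.sum_add_distrib]
  refine Finset.sum_le_sum fun k _ ↦ ?_
  have hq (q : ℕ) : q + q / 30 ≤ 1 + q / 2 + q / 3 + q / 5 := by omega
  have hk : ((N / k : ℕ) : ℝ) + (N / 30 / k : ℕ) ≤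
      1 + (N / 2 / k : ℕ) + (N / 3 / k : ℕ) + (N / 5 / k : ℕ) := by
    simp only [Nat.div_right_comm N _ k]
    exact_mod_cast hq (N / k)
  nlinarith [mul_le_mul_of_nonneg_left hk (ArithmeticFunction.vonMangoldt_nonneg (n := k))]

theorem log_factorial_le_stirling {n : ℕ} (hn : n ≠ 0) :
    log (n.factorial : ℝ) ≤ n * log n - n + log n / 2 + 1 := by
  obtain ⟨m, rfl⟩ := Nat.exists_eq_succ_of_ne_zero hn
  have h := Stirling.log_stirlingSeq'_antitone (Nat.zero_le m)
  simp only [Function.comp_apply, Stirling.log_stirlingSeq_formula] at h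
  have h1 : ((m.succ : ℕ) : ℝ) ≠ 0 := by positivity
  rw [log_div h1 (by positivity), log_mul (by norm_num) h1] at h
  simp at h ⊢
  linarith

theorem le_log_of_exp_one_pow_le {a : ℝ} {p q : ℕ} (ha : 0 < a) (hq : 0 < q)
    (h : (2.7182818286 : ℝ) ^ p ≤ a ^ q) : (p / q : ℝ) ≤ log a := by
  have hexp : exp p ≤ a ^ q := by
    rw [← mul_one (p : ℝ), exp_nat_mul]
    exact (pow_le_pow_left₀ (exp_pos 1).le exp_one_lt_d9.le p).trans h
  rw [div_le_iff₀ (by positivity), mul_comm, ← log_pow]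
  exact (le_log_iff_exp_le (by positivity)).2 hexp

theorem le_psi_thirty_mul {M : ℕ} (hM : M ≠ 0) :
    27.638 * M - 2.95 - log M / 2 ≤ Chebyshev.psi ((30 * M : ℕ) : ℝ) := by
  have h := log_factorial_combination_le_psi (30 * M)
  rw [show 30 * M / 2 = 15 * M by omega, show 30 * M / 3 = 10 * M by omega,
    show 30 * M / 5 = 6 * M by omega, show 30 * M / 30 = M by omega] at h
  have h30 := Stirling.le_log_factorial_stirling (n := 30 * M) (by omega)
  have h1 := Stirling.le_log_factorial_stirling hM
  have h15 := log_factorial_le_stirling (n := 15 * M) (by omega)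
  have h10 := log_factorial_le_stirling (n := 10 * M) (by omega)
  have h6 := log_factorial_le_stirling (n := 6 * M) (by omega)
  have hM0 : (M : ℝ) ≠ 0 := by positivity
  have hMpos : (0 : ℝ) < M := by positivity
  have l30 : log 30 = log 2 + log 3 + log 5 := by
    rw [← log_mul (by norm_num) (by norm_num), ← log_mul (by norm_num) (by norm_num)]; norm_num
  have l15 : log 15 = log 3 + log 5 := by rw [← log_mul (by norm_num) (by norm_num)]; norm_num
  have l10 : log 10 = log 2 + log 5 := by rw [← log_mul (by norm_num) (by norm_num)]; norm_num
  have l6 : log 6 = log 2 + log 3 := by rw [← log_mul (by norm_num) (by norm_num)]; norm_num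
  push_cast at h30 h15 h10 h6
  rw [log_mul (by norm_num) hM0, l30] at h30
  rw [log_mul (by norm_num) hM0, l15] at h15
  rw [log_mul (by norm_num) hM0, l10] at h10
  rw [log_mul (by norm_num) hM0, l6] at h6
  have e2 := log_two_gt_d9
  have e3 : (78 / 71 : ℝ) ≤ log 3 :=
    mod_cast le_log_of_exp_one_pow_le (p := 78) (q := 71) (a := 3) (by norm_num) (by norm_num)
      (by norm_num)
  have e5 : (103 / 64 : ℝ) ≤ log 5 :=
    mod_cast le_log_of_exp_one_pow_le (p := 103) (q := 64) (a := 5) (by norm_num) (by norm_num)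
      (by norm_num)
  have epi : (1.8 : ℝ) ≤ log (2 * π) := by
    have := le_log_of_exp_one_pow_le (p := 9) (q := 5) (a := 2 * π) (by positivity) (by norm_num)
      ((by norm_num : (2.7182818286 : ℝ) ^ 9 ≤ 6.2 ^ 5).trans
        (pow_le_pow_left₀ (by norm_num) (by linarith [pi_gt_d2]) 5))
    norm_num at this ⊢
    exact this
  have e30 : 2 * log 30 ≤ 7 := by
    have h7 : log ((30 : ℝ) ^ 2) ≤ 7 := by
      refine (log_le_iff_le_exp (by norm_num)).2 ?_
      rw [show (7 : ℝ) = (7 : ℕ) * 1 by norm_num, exp_nat_mul]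
      exact (by norm_num : (30 : ℝ) ^ 2 ≤ 2.7182818283 ^ 7).trans
        (pow_le_pow_left₀ (by norm_num) exp_one_gt_d9.le 7)
    simpa [log_pow] using h7
  rw [l30] at e30
  have hlin : 27.638 * (M : ℝ) ≤ (14 * log 2 + 9 * log 3 + 5 * log 5) * M :=
    mul_le_mul_of_nonneg_right (by linarith) hMpos.le
  linarith

theorem div_log_add_three_lt_primeCounting_of_large {L : ℝ} (hL : 512 ≤ L) :
    L / log L + 3 < Nat.primeCounting ⌊1.27 * L⌋₊ := by
  set X : ℝ := 1.27 * L with hX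
  set M : ℕ := ⌊X / 30⌋₊ with hM
  have hM1 : X / 30 < M + 1 := Nat.lt_floor_add_one _
  have hMX : (M : ℝ) ≤ X / 30 := Nat.floor_le (by linarith)
  have hMpos : (0 : ℝ) < M := by linarith
  have hpsi := (le_psi_thirty_mul (M := M) (by exact_mod_cast hMpos.ne')).trans
    ((Chebyshev.psi_mono (by push_cast; linarith : ((30 * M : ℕ) : ℝ) ≤ X)).trans
      (Chebyshev.psi_le_primeCounting_mul_log' X))
  have hlogM : log M ≤ log X := log_le_log hMpos (by linarith)
  have h512 : log 512 = 9 * log 2 := by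
    rw [show (512 : ℝ) = 2 ^ 9 by norm_num, log_pow]
    norm_num
  have hlogL : 6.23 ≤ log L := by
    linarith [log_le_log (by norm_num) hL, log_two_gt_d9]
  have hlogX : log X ≤ log L + 0.24 := by
    have h127 : log 1.27 ≤ 0.24 := by
      refine (log_le_iff_le_exp (by norm_num)).2 (le_trans ?_
        (Real.sum_le_exp_of_nonneg (by norm_num) 4))
      norm_num [Finset.sum_range_succ, Nat.factorial]
    rw [hX, log_mul (by norm_num) (by linarith)]
    linarith
  have hlogL' : log L ≤ 6.24 + (L / 512 - 1) := by
    have := log_le_sub_one_of_pos (show 0 < L / 512 by linarith)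
    rw [log_div (by linarith) (by norm_num)] at this
    linarith [log_two_lt_d9]
  have hLpos : 0 < log L := by linarith
  by_contra! hcon
  have hXpos : 0 ≤ log X := log_nonneg (by linarith)
  have hmul : (Nat.primeCounting ⌊X⌋₊ : ℝ) * log X ≤ (L / log L + 3) * (log L + 0.24) :=
    mul_le_mul hcon hlogX hXpos (by positivity)
  have hquot : L / log L ≤ 0.161 * L := by
    rw [div_le_iff₀ hLpos]
    nlinarith
  have hexpand : (L / log L + 3) * (log L + 0.24) =
      L + 0.24 * (L / log L) + 3 * log L + 0.72 := by
    field_simp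
    ring
  rw [hexpand] at hmul
  linarith only [hpsi, hlogM, hM1, hX, hL, hlogX, hlogL', hmul, hquot]

theorem div_log_add_three_lt_primeCounting_of_block {L : ℝ} (a b N n p q : ℕ)
    (haL : (a : ℝ) ≤ L) (hLb : L < b) (hn : n + 3 ≤ Nat.primeCounting N)
    (hN : 100 * N ≤ 127 * a) (ha : 1 < a) (hq : 0 < q)
    (hlog : (2.7182818286 : ℝ) ^ p ≤ (a : ℝ) ^ q) (hb : b * q ≤ n * p) :
    L / log L + 3 < Nat.primeCounting ⌊1.27 * L⌋₊ := by
  have ha' : (1 : ℝ) < a := by exact_mod_cast ha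
  have hlogL : (p / q : ℝ) ≤ log L :=
    (le_log_of_exp_one_pow_le (by linarith) hq hlog).trans (log_le_log (by linarith) haL)
  have hLpos : 0 < log L := log_pos (by linarith)
  have hlt : L / log L < n := by
    rw [div_lt_iff₀ hLpos]
    have hbn : (b : ℝ) ≤ n * (p / q) := by
      rw [← mul_div_assoc, le_div_iff₀ (by positivity)]
      exact_mod_cast hb
    exact hLb.trans_le (hbn.trans (mul_le_mul_of_nonneg_left hlogL n.cast_nonneg))
  have hNfloor : N ≤ ⌊1.27 * L⌋₊ := by
    refine Nat.le_floor ?_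
    have : (100 : ℝ) * N ≤ 127 * a := by exact_mod_cast hN
    linarith
  have hmono : ((n + 3 : ℕ) : ℝ) ≤ Nat.primeCounting ⌊1.27 * L⌋₊ :=
    Nat.cast_le.2 (hn.trans (Nat.monotone_primeCounting hNfloor))
  push_cast at hmono
  linarith

theorem div_log_add_three_lt_primeCounting {L : ℝ} (hL : 42 ≤ L) :
    L / log L + 3 < Nat.primeCounting ⌊1.27 * L⌋₊ := by
  rcases lt_or_ge L 48 with h48 | h48
  · exact div_log_add_three_lt_primeCounting_of_block 42 48 53 13 37 10
      (mod_cast hL) (mod_cast h48)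
      (by decide +kernel) (by norm_num) (by norm_num) (by norm_num) (by norm_num) (by norm_num)
  rcases lt_or_ge L 54 with h54 | h54
  · exact div_log_add_three_lt_primeCounting_of_block 48 54 60 14 193 50
      (mod_cast h48) (mod_cast h54)
      (by decide +kernel) (by norm_num) (by norm_num) (by norm_num) (by norm_num) (by norm_num)
  rcases lt_or_ge L 63 with h63 | h63
  · exact div_log_add_three_lt_primeCounting_of_block 54 63 68 16 79 20
      (mod_cast h54) (mod_cast h63)
      (by decide +kernel) (by norm_num) (by norm_num) (by norm_num) (by norm_num) (by norm_num)
  rcases lt_or_ge L 78 with h78 | h78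
  · exact div_log_add_three_lt_primeCounting_of_block 63 78 80 19 103 25
      (mod_cast h63) (mod_cast h78)
      (by decide +kernel) (by norm_num) (by norm_num) (by norm_num) (by norm_num) (by norm_num)
  rcases lt_or_ge L 95 with h95 | h95
  · exact div_log_add_three_lt_primeCounting_of_block 78 95 99 22 108 25
      (mod_cast h78) (mod_cast h95)
      (by decide +kernel) (by norm_num) (by norm_num) (by norm_num) (by norm_num) (by norm_num)
  rcases lt_or_ge L 122 with h122 | h122
  · exact div_log_add_three_lt_primeCounting_of_block 95 122 120 27 181 40
      (mod_cast h95) (mod_cast h122)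
      (by decide +kernel) (by norm_num) (by norm_num) (by norm_num) (by norm_num) (by norm_num)
  rcases lt_or_ge L 158 with h158 | h158
  · exact div_log_add_three_lt_primeCounting_of_block 122 158 154 33 24 5
      (mod_cast h122) (mod_cast h158)
      (by decide +kernel) (by norm_num) (by norm_num) (by norm_num) (by norm_num) (by norm_num)
  rcases lt_or_ge L 217 with h217 | h217
  · exact div_log_add_three_lt_primeCounting_of_block 158 217 200 43 101 20
      (mod_cast h158) (mod_cast h217)
      (by decide +kernel) (by norm_num) (by norm_num) (by norm_num) (by norm_num) (by norm_num)
  rcases lt_or_ge L 295 with h295 | h295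
  · exact div_log_add_three_lt_primeCounting_of_block 217 295 275 55 43 8
      (mod_cast h217) (mod_cast h295)
      (by decide +kernel) (by norm_num) (by norm_num) (by norm_num) (by norm_num) (by norm_num)
  rcases lt_or_ge L 403 with h403 | h403
  · exact div_log_add_three_lt_primeCounting_of_block 295 403 374 71 142 25
      (mod_cast h295) (mod_cast h403)
      (by decide +kernel) (by norm_num) (by norm_num) (by norm_num) (by norm_num) (by norm_num)
  rcases lt_or_ge L 512 with h512 | h512
  · exact div_log_add_three_lt_primeCounting_of_block 403 512 511 94 11 2
      (mod_cast h403) (mod_cast h512)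
      (by decide +kernel) (by norm_num) (by norm_num) (by norm_num) (by norm_num) (by norm_num)
  exact div_log_add_three_lt_primeCounting_of_large h512

theorem exists_odd_primes_mul_mod_four_eq_one {D N : ℕ}
    (hcard : D.primeFactors.card + 4 ≤ Nat.primeCounting N) (hD : D ≠ 0) :
    ∃ q₁ q₂ : ℕ, q₁.Prime ∧ q₂.Prime ∧ Odd q₁ ∧ Odd q₂ ∧ q₁ ≠ q₂ ∧
      ¬ q₁ ∣ D ∧ ¬ q₂ ∣ D ∧ (q₁ * q₂) % 4 = 1 ∧ q₁ ≤ N ∧ q₂ ≤ N := by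
  set S : Finset ℕ := Nat.primesLE N \ insert 2 D.primeFactors with hS
  have hScard : 3 ≤ S.card := by
    have h1 := Finset.le_card_sdiff (insert 2 D.primeFactors) (Nat.primesLE N)
    have h2 := Finset.card_insert_le 2 D.primeFactors
    rw [Nat.primesLE_card_eq_primeCounting, ← hS] at h1
    omega
  have hmem {q : ℕ} (hq : q ∈ S) : q.Prime ∧ Odd q ∧ ¬ q ∣ D ∧ q ≤ N := by
    simp only [hS, Finset.mem_sdiff, Finset.mem_insert, Nat.mem_primeFactors, not_or,
      Nat.mem_primesLE] at hq
    obtain ⟨⟨hqN, hqp⟩, hq2, hqD⟩ := hq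
    exact ⟨hqp, hqp.odd_of_ne_two hq2, fun h ↦ hqD ⟨hqp, h, hD⟩, hqN⟩
  obtain ⟨q₁, h₁, q₂, h₂, hne, hmod⟩ :=
    Finset.exists_ne_map_eq_of_card_lt_of_maps_to (s := S) (t := {1, 3}) (f := fun q ↦ q % 4)
      (by rw [Finset.card_pair (by norm_num)]; omega)
      (fun q hq ↦ by
        have := Nat.odd_iff.1 (hmem hq).2.1
        have h4 : q % 4 = 1 ∨ q % 4 = 3 := by omega
        simpa using h4)
  obtain ⟨hp₁, ho₁, hd₁, hN₁⟩ := hmem h₁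
  obtain ⟨hp₂, ho₂, hd₂, hN₂⟩ := hmem h₂
  refine ⟨q₁, q₂, hp₁, hp₂, ho₁, ho₂, hne, hd₁, hd₂, ?_, hN₁, hN₂⟩
  have hodd := Nat.odd_iff.1 ho₁
  have h4 : q₁ % 4 = 1 ∨ q₁ % 4 = 3 := by omega
  rcases h4 with h | h <;> rw [Nat.mul_mod, ← hmod, h]

/-- **Lemma (auxiliary primes).** Let `d < 0` be a fundamental discriminant with
`|d| ≥ 9.8·10^18` and `ω(|d|) ≤ log |d| / log log |d|`. Then there exist two distinct
odd primes `q₁, q₂`, neither dividing `d`, with `q₁·q₂ ≡ 1 (mod 4)`, such that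
`qᵢ ≤ 1.27·log |d|` and `k = q₁·q₂ ≤ 1.62·(log |d|)²`. -/
theorem exists_auxiliary_primes
    (d : ℤ) (hd : d < 0)
    (K : Type*) [Field K] [NumberField K]
    (hdeg : Module.finrank ℚ K = 2)
    (hdisc : NumberField.discr K = d)
    (hsize : (|d| : ℝ) ≥ 9.8e18)
    (homega : (d.natAbs.primeFactors.card : ℝ) ≤
      Real.log |(d : ℝ)| / Real.log (Real.log |(d : ℝ)|)) :
    ∃ q₁ q₂ : ℕ, q₁.Prime ∧ q₂.Prime ∧ Odd q₁ ∧ Odd q₂ ∧ q₁ ≠ q₂ ∧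
      ¬ ((q₁ : ℤ) ∣ d) ∧ ¬ ((q₂ : ℤ) ∣ d) ∧ (q₁ * q₂) % 4 = 1 ∧
      (q₁ : ℝ) ≤ 1.27 * Real.log |(d : ℝ)| ∧
      (q₂ : ℝ) ≤ 1.27 * Real.log |(d : ℝ)| ∧
      ((q₁ * q₂ : ℕ) : ℝ) ≤ 1.62 * (Real.log |(d : ℝ)|) ^ 2 := by
  set L : ℝ := Real.log |(d : ℝ)| with hLdef
  have hL : 42 ≤ L := by
    refine (le_log_iff_exp_le (by linarith)).2 (le_trans ?_ hsize)
    rw [show (42 : ℝ) = (42 : ℕ) * 1 by norm_num, exp_nat_mul]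
    exact (pow_le_pow_left₀ (exp_pos 1).le exp_one_lt_d9.le 42).trans (by norm_num)
  have hcard : d.natAbs.primeFactors.card + 4 ≤ Nat.primeCounting ⌊1.27 * L⌋₊ := by
    have h : ((d.natAbs.primeFactors.card + 3 : ℕ) : ℝ) < Nat.primeCounting ⌊1.27 * L⌋₊ := by
      push_cast
      linarith [div_log_add_three_lt_primeCounting hL]
    exact Nat.cast_lt.1 h
  obtain ⟨q₁, q₂, hp₁, hp₂, ho₁, ho₂, hne, hd₁, hd₂, hmod, hN₁, hN₂⟩ :=
    exists_odd_primes_mul_mod_four_eq_one hcard (Int.natAbs_ne_zero.2 hd.ne)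
  have hle {q : ℕ} (hq : q ≤ ⌊1.27 * L⌋₊) : (q : ℝ) ≤ 1.27 * L :=
    (Nat.le_floor_iff (by linarith)).1 hq
  refine ⟨q₁, q₂, hp₁, hp₂, ho₁, ho₂, hne, mt Int.natCast_dvd.1 hd₁, mt Int.natCast_dvd.1 hd₂,
    hmod, hle hN₁, hle hN₂, ?_⟩
  push_cast
  have := mul_le_mul (hle hN₁) (hle hN₂) q₂.cast_nonneg (by linarith)
  nlinarith [sq_nonneg L]
end

section
/- Let d < 0 be an integer with |d| ≥ 9.8·10^18, and let q₁, q₂ be distinct odd primes with k = q₁·q₂ ≡ 1 (mod 4) and k ≤ 1.62·(log|d|)². Then the class number of the real quadratic field ℚ(√k) is at most 0.64·log|d|. -/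
section QuadraticField

open NumberField

/-- The conjugation on a quadratic order of discriminant `D`, together with a square root `δ`
of `D` and the integers `trace`, `norm` and `coef` attached to an element
`x = (trace + coef δ) / 2`. -/
structure QuadraticConj (R : Type*) [CommRing R] (D : ℤ) where
  σ : R ≃+* R
  δ : R
  trace : R → ℤ
  norm : R → ℤ
  coef : R → ℤ
  add_conj : ∀ x, x + σ x = trace x
  mul_conj : ∀ x, x * σ x = norm x
  sub_conj : ∀ x, x - σ x = coef x * δ
  sq_δ : δ ^ 2 = D
  exists_odd : ∃ x, Odd (coef x)

theorem nonempty_quadraticConj (K : Type*) [Field K] [NumberField K]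
    (hdeg : Module.finrank ℚ K = 2) : Nonempty (QuadraticConj (𝓞 K) (discr K)) := by
  classical
  have : Algebra.IsQuadraticExtension ℚ K := ⟨hdeg⟩
  have hcard : Nat.card Gal(K/ℚ) = 2 := by rw [IsGalois.card_aut_eq_finrank, hdeg]
  obtain ⟨τ, hτ, huniv⟩ := (Nat.card_eq_two_iff' (1 : Gal(K/ℚ))).mp hcard
  have hset : (Finset.univ : Finset Gal(K/ℚ)) = {1, τ} := by
    ext x
    by_cases hx : x = 1
    · simp [hx]
    · simp [huniv x hx]
  let σ : 𝓞 K ≃+* 𝓞 K := RingOfIntegers.mapRingEquiv τ.toRingEquiv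
  have hσ (x : 𝓞 K) : ((σ x : 𝓞 K) : K) = τ x := rfl
  have htr (x : 𝓞 K) : x + σ x = (Algebra.trace ℤ (𝓞 K) x : ℤ) := by
    apply RingOfIntegers.ext
    have h := trace_eq_sum_automorphisms (K := ℚ) (x : K)
    rw [hset, Finset.sum_pair hτ.symm, ← Algebra.coe_trace_int] at h
    simpa [hσ] using h.symm
  have hnm (x : 𝓞 K) : x * σ x = (Algebra.norm ℤ x : ℤ) := by
    apply RingOfIntegers.ext
    have h := Algebra.norm_eq_prod_automorphisms ℚ (x : K)
    rw [hset, Finset.prod_pair hτ.symm, ← Algebra.coe_norm_int] at h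
    simpa [hσ] using h.symm
  let b : Module.Basis (Fin 2) ℤ (𝓞 K) :=
    Module.finBasisOfFinrankEq ℤ (𝓞 K) (by rw [RingOfIntegers.rank, hdeg])
  have hrepr (x : 𝓞 K) : x = (b.repr x 0 : 𝓞 K) * b 0 + (b.repr x 1 : 𝓞 K) * b 1 := by
    conv_lhs => rw [← b.sum_repr x]
    simp [Fin.sum_univ_two]
  set u := b.repr 1 0 with hu
  set v := b.repr 1 1 with hv
  have hone : (1 : 𝓞 K) = u * b 0 + v * b 1 := hrepr 1
  have hone' : (1 : 𝓞 K) = u * σ (b 0) + v * σ (b 1) := by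
    have := congrArg σ hone
    simpa using this
  set δ : 𝓞 K := b 0 * σ (b 1) - σ (b 0) * b 1 with hδ
  have hδ₀ : b 0 - σ (b 0) = v * δ := by
    linear_combination (b 0) * hone' - σ (b 0) * hone
  have hδ₁ : b 1 - σ (b 1) = -u * δ := by
    linear_combination (b 1) * hone' - σ (b 1) * hone
  have hdisc : δ ^ 2 = (discr K : ℤ) := by
    rw [← discr_eq_discr K b, Algebra.discr_def, Matrix.det_fin_two]
    simp only [Algebra.traceMatrix_apply, Algebra.traceForm_apply]
    push_cast
    simp only [← htr, map_mul]
    ring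
  let coef (x : 𝓞 K) : ℤ := b.repr x 0 * v - b.repr x 1 * u
  have hcoef (x : 𝓞 K) : x - σ x = coef x * δ := by
    have h1 := hrepr x
    have h2 := congrArg σ h1
    simp only [map_add, map_mul, map_intCast] at h2
    simp only [coef]
    push_cast
    linear_combination h1 - h2 + (b.repr x 0 : 𝓞 K) * hδ₀ + (b.repr x 1 : 𝓞 K) * hδ₁
  refine ⟨⟨σ, δ, fun x ↦ Algebra.trace ℤ (𝓞 K) x, fun x ↦ Algebra.norm ℤ x, coef,
    htr, hnm, hcoef, hdisc, ?_⟩⟩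
  by_contra! hno
  have hv2 : Even v := by
    have := hno (b 0)
    simpa [coef] using this
  have hu2 : Even u := by
    have := hno (b 1)
    simpa [coef] using this
  obtain ⟨u', hu'⟩ := hu2
  obtain ⟨v', hv'⟩ := hv2
  have h2 : (1 : 𝓞 K) = 2 * (u' * b 0 + v' * b 1) := by
    rw [hu', hv'] at hone
    push_cast at hone
    linear_combination hone
  set y := (u' : 𝓞 K) * b 0 + v' * b 1
  have h3 : (1 : 𝓞 K) = 2 * σ y := by simpa [map_ofNat σ 2] using congrArg σ h2
  have h4 : ((1 : ℤ) : 𝓞 K) = ((4 * Algebra.norm ℤ y : ℤ) : 𝓞 K) := by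
    push_cast
    rw [← hnm]
    linear_combination h2 + 2 * y * h3
  have := Int.cast_injective h4
  omega

end QuadraticField

section IdealCount

open Ideal

variable {R : Type*} [CommRing R] [IsDedekindDomain R] [Module.Free ℤ R]

theorem Ideal.eq_of_le_of_absNorm_eq {I J : Ideal R} (hle : J ≤ I)
    (h : absNorm J = absNorm I) (h0 : absNorm I ≠ 0) : J = I := by
  obtain ⟨C, rfl⟩ := dvd_iff_le.mpr hle
  rw [map_mul] at h
  have hC : absNorm C = 1 := Nat.eq_of_mul_eq_mul_left (Nat.pos_of_ne_zero h0) (by simpa using h)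
  rw [absNorm_eq_one_iff] at hC
  simp [hC]

theorem Ideal.natCast_mem_of_absNorm_eq {P : Ideal R} {p : ℕ} (hP : absNorm P = p) :
    (p : R) ∈ P := hP ▸ absNorm_mem P

theorem Ideal.intCast_mem_iff_of_absNorm_eq_prime {P : Ideal R} {p : ℕ} (hp : p.Prime)
    (hP : absNorm P = p) (n : ℤ) : (n : R) ∈ P ↔ (p : ℤ) ∣ n := by
  have hpP := natCast_mem_of_absNorm_eq hP
  refine ⟨fun hn ↦ ?_, ?_⟩
  · by_contra hdvd
    obtain ⟨a, b, hab⟩ := (Nat.prime_iff_prime_int.mp hp).coprime_iff_not_dvd.mpr hdvd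
    have h1 : ((1 : ℤ) : R) ∈ P := by
      rw [← hab]
      push_cast
      exact P.add_mem (P.mul_mem_left _ hpP) (P.mul_mem_left _ hn)
    have : P = ⊤ := (eq_top_iff_one P).mpr (by simpa using h1)
    rw [← absNorm_eq_one_iff, hP] at this
    exact hp.one_lt.ne' this
  · rintro ⟨c, rfl⟩
    push_cast
    exact P.mul_mem_right _ hpP

theorem QuadraticConj.mem_or_conj_mem {D : ℤ} (q : QuadraticConj R D)
    {P Q : Ideal R} [Q.IsPrime] {p : ℕ} (hp : p.Prime)
    (hP : absNorm P = p) (hQ : (p : R) ∈ Q) {x : R} (hx : x ∈ P) : x ∈ Q ∨ q.σ x ∈ Q := by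
  have h1 : (q.norm x : R) ∈ P := q.mul_conj x ▸ P.mul_mem_right _ hx
  obtain ⟨c, hc⟩ := (intCast_mem_iff_of_absNorm_eq_prime hp hP _).mp h1
  apply (‹Q.IsPrime›).mem_or_mem
  rw [q.mul_conj, hc]
  push_cast
  exact Q.mul_mem_right _ hQ

theorem QuadraticConj.eq_or_eq_comap {D : ℤ} (q : QuadraticConj R D)
    {P Q : Ideal R} {p : ℕ} (hp : p.Prime)
    (hP : absNorm P = p) (hQ : absNorm Q = p) : P = Q ∨ P = Q.comap q.σ := by
  have hQp : Q.IsPrime := isPrime_of_irreducible_absNorm (hQ ▸ hp)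
  have hPm : P.IsMaximal := (isPrime_of_irreducible_absNorm (hP ▸ hp)).isMaximal (by
    rintro rfl
    exact hp.ne_zero (by rw [← hP, absNorm_bot]))
  have hsub : (P : Set R) ⊆ (Q : Set R) ∪ (Q.comap q.σ : Set R) := fun x hx ↦
    q.mem_or_conj_mem hp hP (natCast_mem_of_absNorm_eq hQ) hx
  rcases subset_union.mp hsub with h | h
  · exact .inl (hPm.eq_of_le hQp.ne_top h)
  · exact .inr (hPm.eq_of_le (hQp.comap q.σ).ne_top h)

theorem QuadraticConj.eq_of_dvd {D : ℤ} (q : QuadraticConj R D) {P Q : Ideal R} {p : ℕ}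
    (hp : p.Prime) (hP : absNorm P = p) (hQ : absNorm Q = p) (hpD : (p : ℤ) ∣ D) : P = Q := by
  have hQp : Q.IsPrime := isPrime_of_irreducible_absNorm (hQ ▸ hp)
  rcases q.eq_or_eq_comap hp hP hQ with h | h
  · exact h
  have hδ : q.δ ∈ Q := hQp.mem_of_pow_mem 2
    (q.sq_δ ▸ (intCast_mem_iff_of_absNorm_eq_prime hp hQ D).mpr hpD)
  have hsub (x : R) : x - q.σ x ∈ Q := q.sub_conj x ▸ Q.mul_mem_left _ hδ
  rw [h]
  ext x
  rw [mem_comap]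
  exact ⟨fun hx ↦ by simpa using Q.add_mem (hsub x) hx,
    fun hx ↦ by simpa using Q.sub_mem hx (hsub x)⟩

theorem Ideal.nonempty_ringHom_zmod {P : Ideal R} {p : ℕ} (hp : p.Prime) (hP : absNorm P = p) :
    Nonempty (R →+* ZMod p) := by
  have hcard : Nat.card (R ⧸ P) = p := by rw [← hP]; rfl
  have : Finite (R ⧸ P) := Nat.finite_of_card_ne_zero (hcard ▸ hp.ne_zero)
  let _ : Fintype (R ⧸ P) := Fintype.ofFinite _
  let e := ZMod.ringEquivOfPrime (R ⧸ P) hp (by rw [← hcard, Nat.card_eq_fintype_card])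
  exact ⟨(e.symm : R ⧸ P →+* ZMod p).comp (Ideal.Quotient.mk P)⟩

theorem QuadraticConj.isSquare_of_absNorm_eq {D : ℤ} (q : QuadraticConj R D) {P : Ideal R}
    {p : ℕ} (hp : p.Prime) (hP : absNorm P = p) : IsSquare (D : ZMod p) := by
  obtain ⟨f⟩ := nonempty_ringHom_zmod hp hP
  exact ⟨f q.δ, by rw [← map_mul, ← sq, q.sq_δ, map_intCast]⟩

theorem QuadraticConj.trace_sq_sub {R : Type*} [CommRing R] [CharZero R] {D : ℤ}
    (q : QuadraticConj R D) (x : R) :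
    q.trace x ^ 2 - 4 * q.norm x = q.coef x ^ 2 * D := by
  apply Int.cast_injective (α := R)
  push_cast
  rw [← q.add_conj, ← q.mul_conj, ← q.sq_δ]
  linear_combination (x - q.σ x + q.coef x * q.δ) * q.sub_conj x

theorem odd_of_sq_sub_eq {T N t D : ℤ} (h : T ^ 2 - 4 * N = t ^ 2 * D)
    (ht : Odd t) (hD : Odd D) : Odd T := by
  have : Odd (T ^ 2) := by
    rw [show T ^ 2 = t ^ 2 * D + 2 * (2 * N) by linear_combination h]
    exact ((ht.pow).mul hD).add_even (even_two_mul _)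
  exact (Int.odd_pow' (by norm_num)).mp this

theorem emod_eight_eq_one_iff_even {T N t D : ℤ} (h : T ^ 2 - 4 * N = t ^ 2 * D)
    (ht : Odd t) (hD : Odd D) : D % 8 = 1 ↔ Even N := by
  have hsq (a : ℤ) (ha : Odd a) : ∃ c, a ^ 2 = 8 * c + 1 := by
    obtain ⟨c, hc⟩ := Int.eight_dvd_sq_sub_one_of_odd ha
    exact ⟨c, by linear_combination hc⟩
  obtain ⟨a, ha⟩ := hsq t ht
  obtain ⟨b, hb⟩ := hsq T (odd_of_sq_sub_eq h ht hD)
  rw [ha, hb] at h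
  rw [Int.even_iff]
  obtain ⟨e, he⟩ : ∃ e, e = a * D := ⟨_, rfl⟩
  have h' : 8 * b + 1 - 4 * N = 8 * e + D := by rw [h, he]; ring
  omega

theorem QuadraticConj.emod_eight_of_absNorm_eq_two [CharZero R] {D : ℤ} (q : QuadraticConj R D)
    {P : Ideal R} (hP : absNorm P = 2) (hD : Odd D) : D % 8 = 1 := by
  obtain ⟨f⟩ := nonempty_ringHom_zmod Nat.prime_two hP
  obtain ⟨x, hx⟩ := q.exists_odd
  have h := q.trace_sq_sub x
  rw [emod_eight_eq_one_iff_even h hx hD]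
  have hsum : f x + f (q.σ x) = 1 := by
    rw [← map_add, q.add_conj, map_intCast]
    exact ZMod.intCast_eq_one_iff_odd.mpr (odd_of_sq_sub_eq h hx hD)
  have hprod : f x * f (q.σ x) = 0 := by
    revert hsum
    generalize f x = a
    generalize f (q.σ x) = b
    revert a b
    decide
  rw [← map_mul, q.mul_conj, map_intCast] at hprod
  exact ZMod.intCast_eq_zero_iff_even.mp hprod

end IdealCount

section IdealCountBound

open Ideal

variable {R : Type*} [CommRing R] [IsDedekindDomain R] [Module.Free ℤ R]

theorem Ideal.absNorm_sup_span_eq {I : Ideal R} {a b : ℕ} (h : a.Coprime b)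
    (hI : absNorm I = a * b) :
    I = (I ⊔ span {(a : R)}) * (I ⊔ span {(b : R)}) := by
  have hab : ((a * b : ℕ) : R) ∈ I := natCast_mem_of_absNorm_eq hI
  have hcop : IsCoprime (a : R) (b : R) := by
    simpa using (Nat.isCoprime_iff_coprime.mpr h).map (Int.castRingHom R)
  apply le_antisymm
  · have hcop' : IsCoprime (I ⊔ span {(a : R)}) (I ⊔ span {(b : R)}) := by
      rw [Ideal.isCoprime_iff_sup_eq, eq_top_iff]
      have := (Ideal.isCoprime_span_singleton_iff _ _).mpr hcop
      rw [Ideal.isCoprime_iff_sup_eq] at this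
      rw [← this]
      exact sup_le_sup le_sup_right le_sup_right
    rw [mul_eq_inf_of_isCoprime hcop']
    exact le_inf le_sup_left le_sup_left
  · rw [sup_mul, mul_sup, mul_sup, span_singleton_mul_span_singleton]
    refine sup_le (sup_le Ideal.mul_le_right Ideal.mul_le_left) (sup_le Ideal.mul_le_right ?_)
    rw [span_singleton_le_iff_mem]
    exact_mod_cast hab

variable [Module.Finite ℤ R]

theorem Ideal.finite_absNorm_eq [CharZero R] (n : ℕ) : Finite {I : Ideal R // absNorm I = n} :=
  (finite_setOfPred_absNorm_eq n).to_subtype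

theorem Ideal.absNorm_sup_span_dvd (hrank : Module.finrank ℤ R = 2) {I : Ideal R} {a b : ℕ}
    (h : a.Coprime b) (hI : absNorm I = a * b) : absNorm (I ⊔ span {(a : R)}) ∣ a := by
  have h1 : absNorm (I ⊔ span {(a : R)}) ∣ a * b :=
    hI ▸ absNorm_dvd_absNorm_of_le le_sup_left
  have h2 : absNorm (I ⊔ span {(a : R)}) ∣ a * a := by
    have := absNorm_dvd_absNorm_of_le (le_sup_right : span {(a : R)} ≤ I ⊔ span {(a : R)})
    rwa [absNorm_span_natCast, hrank, sq] at this
  have := Nat.dvd_gcd h1 h2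
  rwa [Nat.gcd_mul_left, h.symm.gcd_eq_one, mul_one] at this

theorem Ideal.absNorm_sup_span (hrank : Module.finrank ℤ R = 2) {I : Ideal R} {a b : ℕ}
    (h : a.Coprime b) (ha : 0 < a) (hb : 0 < b) (hI : absNorm I = a * b) :
    absNorm (I ⊔ span {(a : R)}) = a := by
  have h1 := absNorm_sup_span_dvd hrank h hI
  have h2 := absNorm_sup_span_dvd hrank h.symm (hI.trans (mul_comm a b))
  have h3 : absNorm (I ⊔ span {(a : R)}) * absNorm (I ⊔ span {(b : R)}) = a * b := by
    rw [← map_mul, ← absNorm_sup_span_eq h hI, hI]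
  apply le_antisymm (Nat.le_of_dvd ha h1)
  have h4 := Nat.le_of_dvd hb h2
  by_contra! hlt
  nlinarith

theorem Ideal.card_absNorm_mul_le [CharZero R] (hrank : Module.finrank ℤ R = 2) {a b : ℕ}
    (h : a.Coprime b) (ha : 0 < a) (hb : 0 < b) :
    Nat.card {I : Ideal R // absNorm I = a * b} ≤
      Nat.card {I : Ideal R // absNorm I = a} * Nat.card {I : Ideal R // absNorm I = b} := by
  have := finite_absNorm_eq (R := R) a
  have := finite_absNorm_eq (R := R) b
  rw [← Nat.card_prod]
  let f (I : {I : Ideal R // absNorm I = a * b}) :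
      {I : Ideal R // absNorm I = a} × {I : Ideal R // absNorm I = b} :=
    (⟨_, absNorm_sup_span hrank h ha hb I.2⟩,
      ⟨_, absNorm_sup_span hrank h.symm hb ha (I.2.trans (mul_comm a b))⟩)
  refine Nat.card_le_card_of_injective f fun I J hIJ ↦ ?_
  simp only [f, Prod.mk.injEq, Subtype.mk.injEq] at hIJ
  apply Subtype.ext
  rw [absNorm_sup_span_eq h I.2, absNorm_sup_span_eq h J.2, hIJ.1, hIJ.2]

theorem Ideal.absNorm_eq_of_isMaximal (hrank : Module.finrank ℤ R = 2) {p e : ℕ} (hp : p.Prime)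
    {I M : Ideal R} (hI : absNorm I = p ^ e) (hM : M.IsMaximal) (hle : I ≤ M) :
    absNorm M = p ∨ M = span {(p : R)} := by
  have hpM : (p : R) ∈ M := hM.isPrime.mem_of_pow_mem e (by
    exact_mod_cast hle (natCast_mem_of_absNorm_eq hI))
  have hspan : span {(p : R)} ≤ M := (span_singleton_le_iff_mem _).mpr hpM
  have hnorm : absNorm (span {(p : R)}) = p ^ 2 := by rw [absNorm_span_natCast, hrank]
  have hdvd : absNorm M ∣ p ^ 2 := hnorm ▸ absNorm_dvd_absNorm_of_le hspan
  obtain ⟨i, hi, hMi⟩ := (Nat.dvd_prime_pow hp).mp hdvd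
  interval_cases i
  · exact absurd (absNorm_eq_one_iff.mp (by simpa using hMi)) hM.ne_top
  · exact .inl (by simpa using hMi)
  · exact .inr (eq_of_le_of_absNorm_eq hspan (hnorm.trans hMi.symm)
      (hMi ▸ pow_ne_zero 2 hp.ne_zero)).symm

theorem Ideal.exists_isMaximal_mul (hrank : Module.finrank ℤ R = 2) {p e : ℕ} (hp : p.Prime)
    {I : Ideal R} (hI : absNorm I = p ^ (e + 1)) :
    ∃ M J : Ideal R, M.IsMaximal ∧ I = M * J ∧ (absNorm M = p ∨ M = span {(p : R)}) := by
  have hne : I ≠ ⊤ := by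
    rw [ne_eq, ← absNorm_eq_one_iff, hI]
    exact (Nat.one_lt_pow (by omega) hp.one_lt).ne'
  obtain ⟨M, hM, hle⟩ := exists_le_maximal I hne
  obtain ⟨J, hJ⟩ := dvd_iff_le.mpr hle
  exact ⟨M, J, hM, hJ, absNorm_eq_of_isMaximal hrank hp hI hM hle⟩

/-- Over an inert prime all ideals are powers of the prime. -/
theorem Ideal.card_absNorm_prime_pow_of_inert [CharZero R] (hrank : Module.finrank ℤ R = 2) {p : ℕ}
    (hp : p.Prime) (hno : ∀ P : Ideal R, absNorm P ≠ p) (e : ℕ) :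
    (Nat.card {I : Ideal R // absNorm I = p ^ e} : ℤ) ≤
      ∑ j ∈ Finset.range (e + 1), (-1) ^ j := by
  induction e using Nat.twoStepInduction with
  | zero => simp [absNorm_eq_one_iff]
  | one =>
    have : IsEmpty {I : Ideal R // absNorm I = p ^ 1} := ⟨fun I ↦ hno I.1 (by simpa using I.2)⟩
    rw [Nat.card_of_isEmpty]
    simp [Finset.sum_range_succ]
  | more e ih _ =>
    have hnorm : absNorm (span {(p : R)}) = p ^ 2 := by rw [absNorm_span_natCast, hrank]
    have := finite_absNorm_eq (R := R) (p ^ e)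
    let f (J : {I : Ideal R // absNorm I = p ^ e}) : {I : Ideal R // absNorm I = p ^ (e + 2)} :=
      ⟨span {(p : R)} * J.1, by rw [map_mul, hnorm, J.2]; ring⟩
    have hf : Function.Surjective f := by
      rintro ⟨I, hI⟩
      obtain ⟨M, J, -, rfl, hM⟩ := exists_isMaximal_mul hrank hp hI
      obtain rfl := hM.resolve_left (hno M)
      refine ⟨⟨J, ?_⟩, rfl⟩
      rw [map_mul, hnorm] at hI
      exact Nat.eq_of_mul_eq_mul_left (pow_pos hp.pos 2) (hI.trans (by ring))
    rw [Finset.sum_range_succ, Finset.sum_range_succ, pow_succ (-1 : ℤ) (e + 1)]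
    have := Nat.card_le_card_of_surjective f hf
    linarith [(Int.ofNat_le.mpr this)]

theorem Ideal.eq_mul_pow_of_absNorm_eq (hrank : Module.finrank ℤ R = 2) {p : ℕ}
    (hp : p.Prime) {P Q : Ideal R} (hP : absNorm P = p)
    (hPQ : ∀ M : Ideal R, absNorm M = p → M = P ∨ M = Q) (e : ℕ) {I : Ideal R}
    (hI : absNorm I = p ^ e) : ∃ i ≤ e, I = P ^ i * Q ^ (e - i) := by
  induction e generalizing I with
  | zero => exact ⟨0, le_rfl, by simpa [absNorm_eq_one_iff] using hI⟩
  | succ e ih =>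
    obtain ⟨M, J, hmax, rfl, hM⟩ := exists_isMaximal_mul hrank hp hI
    have hMp : absNorm M = p := by
      refine hM.resolve_right ?_
      rintro rfl
      have hprime : P.IsPrime := isPrime_of_irreducible_absNorm (hP ▸ hp)
      have heq := hmax.eq_of_le hprime.ne_top
        ((span_singleton_le_iff_mem _).mpr (natCast_mem_of_absNorm_eq hP))
      rw [← heq, absNorm_span_natCast, hrank] at hP
      nlinarith [hp.two_le]
    have hJ : absNorm J = p ^ e := by
      rw [map_mul, hMp, pow_succ'] at hI
      exact Nat.eq_of_mul_eq_mul_left hp.pos hI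
    obtain ⟨i, hi, rfl⟩ := ih hJ
    rcases hPQ M hMp with rfl | rfl
    · exact ⟨i + 1, by omega, by rw [pow_succ', mul_assoc, Nat.add_sub_add_right]⟩
    · exact ⟨i, by omega, by rw [Nat.sub_add_comm hi, pow_succ']; ring⟩

theorem Ideal.card_absNorm_prime_pow_le_one [CharZero R] (hrank : Module.finrank ℤ R = 2) {p : ℕ}
    (hp : p.Prime) (huniq : ∀ P Q : Ideal R, absNorm P = p → absNorm Q = p → P = Q) (e : ℕ) :
    Nat.card {I : Ideal R // absNorm I = p ^ e} ≤ 1 := by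
  by_cases hex : ∃ P : Ideal R, absNorm P = p
  · obtain ⟨P, hP⟩ := hex
    have := finite_absNorm_eq (R := R) (p ^ e)
    rw [Finite.card_le_one_iff_subsingleton]
    have hI (I : {I : Ideal R // absNorm I = p ^ e}) : I.1 = P ^ e := by
      obtain ⟨i, hi, h⟩ := eq_mul_pow_of_absNorm_eq hrank hp hP (Q := P)
        (fun M hM ↦ .inl (huniq M P hM hP)) e I.2
      rw [h, ← pow_add, Nat.add_sub_cancel' hi]
    exact ⟨fun I J ↦ Subtype.ext ((hI I).trans (hI J).symm)⟩
  · have h := card_absNorm_prime_pow_of_inert hrank hp (not_exists.mp hex) e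
    have h2 : ∑ j ∈ Finset.range (e + 1), (-1 : ℤ) ^ j ≤ 1 := by
      rw [neg_one_geom_sum]
      split_ifs <;> norm_num
    exact_mod_cast h.trans h2

theorem QuadraticConj.card_absNorm_prime_pow_le [CharZero R] {D : ℤ} (q : QuadraticConj R D)
    (hrank : Module.finrank ℤ R = 2) {p : ℕ} (hp : p.Prime) (e : ℕ) :
    Nat.card {I : Ideal R // absNorm I = p ^ e} ≤ e + 1 := by
  by_cases hex : ∃ P : Ideal R, absNorm P = p
  · obtain ⟨P, hP⟩ := hex
    have := finite_absNorm_eq (R := R) (p ^ e)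
    have hex (I : {I : Ideal R // absNorm I = p ^ e}) :
        ∃ i : Fin (e + 1), I.1 = P ^ (i : ℕ) * (P.comap q.σ) ^ (e - i) := by
      obtain ⟨i, hi, h⟩ := eq_mul_pow_of_absNorm_eq hrank hp hP
        (fun M hM ↦ q.eq_or_eq_comap hp hM hP) e I.2
      exact ⟨⟨i, by omega⟩, h⟩
    choose g hg using hex
    have hinj : Function.Injective g := fun I J hIJ ↦
      Subtype.ext (by rw [hg I, hg J, hIJ])
    simpa using Nat.card_le_card_of_injective g hinj
  · exact (card_absNorm_prime_pow_le_one hrank hp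
      (fun P _ hP _ ↦ (hex ⟨P, hP⟩).elim) e).trans (by omega)

theorem QuadraticConj.card_absNorm_le_sum_divisors [CharZero R] {D : ℤ} (q : QuadraticConj R D)
    (hrank : Module.finrank ℤ R = 2) (χ : ℕ →*₀ ℤ)
    (hχ : ∀ p : ℕ, p.Prime → χ p = 1 ∨ (χ p = 0 ∧ (p : ℤ) ∣ D) ∨
      (χ p = -1 ∧ ∀ P : Ideal R, absNorm P ≠ p)) {n : ℕ} (hn : n ≠ 0) :
    (Nat.card {I : Ideal R // absNorm I = n} : ℤ) ≤ ∑ d ∈ n.divisors, χ d := by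
  induction n using Nat.recOnPosPrimePosCoprime with
  | zero => exact absurd rfl hn
  | one => simp [absNorm_eq_one_iff]
  | prime_pow p e hp he =>
    rw [Nat.sum_divisors_prime_pow hp]
    simp only [map_pow]
    rcases hχ p hp with h | ⟨h, hpD⟩ | ⟨h, hno⟩
    · simpa [h] using Int.ofNat_le.mpr (q.card_absNorm_prime_pow_le hrank hp e)
    · have : ∑ j ∈ Finset.range (e + 1), (0 : ℤ) ^ j = 1 := by
        rw [Finset.sum_range_succ']; simp
      rw [h, this]
      exact_mod_cast card_absNorm_prime_pow_le_one hrank hp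
        (fun P Q hP hQ ↦ q.eq_of_dvd hp hP hQ hpD) e
    · rw [h]
      exact card_absNorm_prime_pow_of_inert hrank hp hno e
  | coprime a b ha hb hab iha ihb =>
    have hsum : ∑ d ∈ (a * b).divisors, χ d =
        (∑ d ∈ a.divisors, χ d) * ∑ d ∈ b.divisors, χ d := by
      let f : ArithmeticFunction ℤ := ⟨χ, map_zero χ⟩
      have hf : f.IsMultiplicative := ⟨map_one χ, fun _ ↦ map_mul χ _ _⟩
      have h := (ArithmeticFunction.isMultiplicative_zeta.natCast.mul hf).map_mul_of_coprime hab
      simp only [ArithmeticFunction.coe_zeta_mul_apply] at h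
      exact h
    rw [hsum]
    have h1 := Int.ofNat_le.mpr (card_absNorm_mul_le hrank hab (by omega) (by omega) (R := R))
    push_cast at h1
    exact h1.trans (mul_le_mul (iha (by omega)) (ihb (by omega)) (by positivity)
      ((Int.natCast_nonneg _).trans (iha (by omega))))

end IdealCountBound

section Residue

open Filter Topology NumberField

theorem LSeries_ofReal_eq (f : ℕ → ℝ) (hf : f 0 = 0) (s : ℝ) :
    LSeries (fun n ↦ (f n : ℂ)) s = ((∑' n : ℕ, f n / (n : ℝ) ^ s : ℝ) : ℂ) := by
  rw [LSeries, Complex.ofReal_tsum]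
  refine tsum_congr fun n ↦ ?_
  rcases eq_or_ne n 0 with rfl | hn
  · simp [hf]
  · rw [LSeries.term_of_ne_zero hn]
    push_cast
    rw [Complex.ofReal_cpow (Nat.cast_nonneg n)]
    simp

theorem dedekindZeta_residue_le_of_card_le (K : Type*) [Field K] [NumberField K] (χ : ℕ → ℝ)
    (hχ0 : χ 0 = 0) (hχ : ∀ n, |χ n| ≤ 1)
    (hcard : ∀ n : ℕ, n ≠ 0 →
      (Nat.card {I : Ideal (𝓞 K) // Ideal.absNorm I = n} : ℝ) ≤ ∑ d ∈ n.divisors, χ d)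
    {B : ℝ → ℝ} {b : ℝ} (hB : ∀ s > 1, ∑' n : ℕ, χ n / (n : ℝ) ^ s ≤ B s)
    (hlim : Tendsto B (𝓝[>] 1) (𝓝 b)) : dedekindZeta_residue K ≤ b := by
  set c : ℕ → ℝ := fun n ↦ if n = 0 then 0 else
    (Nat.card {I : Ideal (𝓞 K) // Ideal.absNorm I = n} : ℝ) with hc
  set one : ℕ → ℝ := fun n ↦ if n = 0 then 0 else 1 with hone
  set g : ℕ → ℝ := fun n ↦ ∑ d ∈ n.divisors, χ d with hg
  have hzeta (s : ℝ) : dedekindZeta K s = ((∑' n : ℕ, c n / (n : ℝ) ^ s : ℝ) : ℂ) := by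
    rw [← LSeries_ofReal_eq c (by simp [hc]), dedekindZeta]
    refine LSeries_congr (fun {n} hn ↦ ?_) _
    simp [hc, hn]
  have hbound (s : ℝ) (hs : 1 < s) :
      ∑' n : ℕ, c n / (n : ℝ) ^ s ≤ (∑' n : ℕ, 1 / (n : ℝ) ^ s) * B s := by
    have hsum1 : LSeriesSummable (fun n ↦ (one n : ℂ)) s :=
      LSeriesSummable_of_bounded_of_one_lt_real (m := 1) (fun n hn ↦ by simp [hone, hn]) hs
    have hsumχ : LSeriesSummable (fun n ↦ (χ n : ℂ)) s :=
      LSeriesSummable_of_bounded_of_one_lt_real (m := 1) (fun n _ ↦ by simpa using hχ n) hs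
    have hconv : LSeries.convolution (fun n ↦ (one n : ℂ)) (fun n ↦ (χ n : ℂ)) =
        fun n ↦ (g n : ℂ) := by
      ext n
      rw [LSeries.convolution_def, hg]
      push_cast
      rw [← Nat.sum_divisorsAntidiagonal' fun _ y ↦ (χ y : ℂ)]
      refine Finset.sum_congr rfl fun x hx ↦ ?_
      simp [hone, (Nat.ne_zero_of_mem_divisorsAntidiagonal hx).1]
    have hsumg : LSeriesSummable (fun n ↦ (g n : ℂ)) s := hconv ▸ hsum1.convolution hsumχ
    have hprod := LSeries_convolution' hsum1 hsumχ
    rw [hconv, LSeries_ofReal_eq g (by simp [hg]), LSeries_ofReal_eq one (by simp [hone]),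
      LSeries_ofReal_eq χ hχ0] at hprod
    have hprod' : ∑' n : ℕ, g n / (n : ℝ) ^ s =
        (∑' n : ℕ, one n / (n : ℝ) ^ s) * ∑' n : ℕ, χ n / (n : ℝ) ^ s := by
      exact_mod_cast hprod
    have honesum : ∑' n : ℕ, one n / (n : ℝ) ^ s = ∑' n : ℕ, 1 / (n : ℝ) ^ s := by
      refine tsum_congr fun n ↦ ?_
      rcases eq_or_ne n 0 with rfl | hn
      · simp [hone, Real.zero_rpow (by linarith : s ≠ 0)]
      · simp [hone, hn]
    have hsummg : Summable fun n : ℕ ↦ g n / (n : ℝ) ^ s := by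
      have := hsumg
      rw [LSeriesSummable] at this
      refine Complex.summable_ofReal.mp (this.congr fun n ↦ ?_)
      rcases eq_or_ne n 0 with rfl | hn
      · simp [hg]
      · rw [LSeries.term_of_ne_zero hn]
        push_cast
        rw [Complex.ofReal_cpow (Nat.cast_nonneg n)]
        simp
    have hle (n : ℕ) : c n / (n : ℝ) ^ s ≤ g n / (n : ℝ) ^ s := by
      refine div_le_div_of_nonneg_right ?_ (by positivity)
      rcases eq_or_ne n 0 with rfl | hn
      · simp [hc, hg]
      · simpa [hc, hn] using hcard n hn
    have hnonneg (n : ℕ) : 0 ≤ c n / (n : ℝ) ^ s := by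
      refine div_nonneg ?_ (by positivity)
      simp only [hc]
      split_ifs <;> positivity
    calc ∑' n : ℕ, c n / (n : ℝ) ^ s ≤ ∑' n : ℕ, g n / (n : ℝ) ^ s :=
          (Summable.of_nonneg_of_le hnonneg hle hsummg).tsum_le_tsum hle hsummg
      _ = (∑' n : ℕ, 1 / (n : ℝ) ^ s) * ∑' n : ℕ, χ n / (n : ℝ) ^ s := by
          rw [hprod', honesum]
      _ ≤ _ := mul_le_mul_of_nonneg_left (hB s hs) (tsum_nonneg fun n ↦ by positivity)
  have hleft : Tendsto (fun s : ℝ ↦ (s - 1) * ∑' n : ℕ, c n / (n : ℝ) ^ s) (𝓝[>] 1)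
      (𝓝 (dedekindZeta_residue K)) := by
    have h := tendsto_sub_one_mul_dedekindZeta_nhdsGT K
    have h' := (Complex.continuous_re.tendsto _).comp h
    simp only [Complex.ofReal_re] at h'
    refine h'.congr fun s ↦ ?_
    simp only [Function.comp_apply, hzeta]
    rw [← Complex.ofReal_one, ← Complex.ofReal_sub, ← Complex.ofReal_mul, Complex.ofReal_re]
  have hright : Tendsto (fun s : ℝ ↦ ((s - 1) * ∑' n : ℕ, 1 / (n : ℝ) ^ s) * B s) (𝓝[>] 1)
      (𝓝 (1 * b)) := tendsto_sub_mul_tsum_nat_rpow.mul hlim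
  rw [one_mul] at hright
  refine le_of_tendsto_of_tendsto hleft hright ?_
  filter_upwards [self_mem_nhdsWithin] with s hs
  rw [mul_assoc]
  exact mul_le_mul_of_nonneg_left (hbound s hs) (sub_nonneg.mpr (le_of_lt hs))

end Residue

section PaleyBound

open Finset

variable {F : Type*} [Field F] [Fintype F] [DecidableEq F]

theorem sum_quadraticChar_sub_mul_sub (hF : ringChar F ≠ 2) (y z : F) :
    ∑ x, quadraticChar F (x - y) * quadraticChar F (x - z) =
      (if y = z then (Fintype.card F : ℤ) else 0) - 1 := by
  have hinv : (quadraticChar F)⁻¹ = quadraticChar F := (quadraticChar_isQuadratic F).inv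
  split_ifs with h
  · subst h
    rw [Fintype.sum_equiv (Equiv.subRight y)
      (fun x ↦ quadraticChar F (x - y) * quadraticChar F (x - y))
      (fun x ↦ quadraticChar F x * quadraticChar F x) (fun x ↦ rfl),
      ← add_sum_erase univ _ (mem_univ 0),
      sum_congr rfl (g := fun _ ↦ (1 : ℤ))
        (fun x hx ↦ by rw [← sq, quadraticChar_sq_one (ne_of_mem_erase hx)])]
    simp [card_erase_of_mem, Nat.cast_sub Fintype.card_pos]
  · have hc : y - z ≠ 0 := sub_ne_zero.mpr h
    have hJ := jacobiSum_nontrivial_inv (quadraticChar_ne_one hF)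
    rw [hinv, jacobiSum] at hJ
    have hneg : quadraticChar F (-1) * quadraticChar F (-1) = 1 := by
      rw [← map_mul]; simp
    have hsq : quadraticChar F (y - z) * quadraticChar F (y - z) = 1 := by
      rw [← sq, quadraticChar_sq_one hc]
    rw [Fintype.sum_equiv (((Equiv.mulLeft₀ (-(y - z)) (neg_ne_zero.mpr hc)).trans
      (Equiv.addRight y)).symm) _
      (fun x ↦ quadraticChar F (-1) * (quadraticChar F x * quadraticChar F (1 - x))),
      ← mul_sum, hJ]
    · linarith
    · intro x
      obtain ⟨u, rfl⟩ := ((Equiv.mulLeft₀ (-(y - z)) (neg_ne_zero.mpr hc)).trans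
        (Equiv.addRight y)).surjective x
      rw [Equiv.symm_apply_apply]
      change quadraticChar F (-(y - z) * u + y - y) * quadraticChar F (-(y - z) * u + y - z) = _
      rw [show -(y - z) * u + y - y = (-1) * ((y - z) * u) by ring,
        show -(y - z) * u + y - z = (y - z) * (1 - u) by ring, map_mul, map_mul, map_mul]
      linear_combination (quadraticChar F (-1) * quadraticChar F u * quadraticChar F (1 - u)) * hsq

theorem sum_sq_sum_quadraticChar_le (hF : ringChar F ≠ 2) (f : F → ℝ) :
    ∑ x, (∑ y, (quadraticChar F (x - y) : ℝ) * f y) ^ 2 ≤ Fintype.card F * ∑ y, f y ^ 2 := by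
  have hexp : ∑ x, (∑ y, (quadraticChar F (x - y) : ℝ) * f y) ^ 2 =
      ∑ y, ∑ z, f y * f z * ((∑ x, quadraticChar F (x - y) * quadraticChar F (x - z) : ℤ) : ℝ) := by
    push_cast
    simp only [sq, sum_mul_sum]
    rw [sum_comm]
    refine sum_congr rfl fun y _ ↦ ?_
    rw [sum_comm]
    simp only [mul_sum]
    exact sum_congr rfl fun z _ ↦ sum_congr rfl fun x _ ↦ by ring
  have hval : ∑ y, ∑ z, f y * f z *
      ((∑ x, quadraticChar F (x - y) * quadraticChar F (x - z) : ℤ) : ℝ) =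
      Fintype.card F * ∑ y, f y ^ 2 - (∑ y, f y) ^ 2 := by
    simp only [sum_quadraticChar_sub_mul_sub hF]
    push_cast
    simp only [mul_sub, mul_ite, mul_zero, mul_one, sum_sub_distrib, sum_ite_eq, mem_univ, if_true]
    rw [sq (∑ y, f y), sum_mul_sum, mul_sum]
    congr 1
    exact sum_congr rfl fun y _ ↦ by ring
  rw [hexp, hval]
  linarith [sq_nonneg (∑ y, f y)]

variable {G : Type*} [Field G] [Fintype G] [DecidableEq G]

theorem sum_sum_quadraticChar_le (hF : ringChar F ≠ 2) (hG : ringChar G ≠ 2)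
    (s : Finset (F × G)) :
    ∑ x ∈ s, ∑ y ∈ s, (quadraticChar F (x.1 - y.1) * quadraticChar G (x.2 - y.2) : ℝ) ≤
      √(Fintype.card F * Fintype.card G) * #s := by
  set f : F × G → ℝ := fun x ↦ if x ∈ s then 1 else 0 with hf
  set Mf : F × G → ℝ := fun x ↦
    ∑ y, (quadraticChar F (x.1 - y.1) * quadraticChar G (x.2 - y.2) : ℝ) * f y with hMf
  have hfs : ∑ x, f x ^ 2 = #s := by simp [hf]
  have hMs : ∑ x, Mf x ^ 2 ≤ Fintype.card F * Fintype.card G * #s := by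
    calc ∑ x, Mf x ^ 2
        = ∑ x₂, ∑ x₁, (∑ y₁, (quadraticChar F (x₁ - y₁) : ℝ) *
            ∑ y₂, (quadraticChar G (x₂ - y₂) : ℝ) * f (y₁, y₂)) ^ 2 := by
          rw [Fintype.sum_prod_type_right]
          simp only [hMf, Fintype.sum_prod_type, mul_sum, mul_assoc]
      _ ≤ ∑ x₂, Fintype.card F * ∑ y₁, (∑ y₂, (quadraticChar G (x₂ - y₂) : ℝ) * f (y₁, y₂)) ^ 2 :=
          sum_le_sum fun x₂ _ ↦ sum_sq_sum_quadraticChar_le hF _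
      _ = Fintype.card F * ∑ y₁, ∑ x₂, (∑ y₂, (quadraticChar G (x₂ - y₂) : ℝ) * f (y₁, y₂)) ^ 2 :=
          by rw [← mul_sum, sum_comm]
      _ ≤ Fintype.card F * ∑ y₁, (Fintype.card G * ∑ y₂, f (y₁, y₂) ^ 2) := by
          gcongr with y₁
          exact sum_sq_sum_quadraticChar_le hG _
      _ = Fintype.card F * Fintype.card G * #s := by
          rw [← hfs, ← mul_sum, Fintype.sum_prod_type, mul_assoc]
  have hsum : ∑ x ∈ s, ∑ y ∈ s,
      (quadraticChar F (x.1 - y.1) * quadraticChar G (x.2 - y.2) : ℝ) = ∑ x, f x * Mf x := by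
    simp [hf, hMf]
  rw [hsum]
  refine (Real.sum_mul_le_sqrt_mul_sqrt univ f Mf).trans ?_
  calc √(∑ x, f x ^ 2) * √(∑ x, Mf x ^ 2)
      ≤ √(#s) * √(Fintype.card F * Fintype.card G * #s) := by rw [hfs]; gcongr
    _ = √(Fintype.card F * Fintype.card G) * #s := by
      rw [Real.sqrt_mul (by positivity), mul_left_comm, Real.mul_self_sqrt (by positivity)]

end PaleyBound

section CharacterSums

open Finset

theorem sum_sum_sub_eq_two_mul (φ : ℤ → ℝ) (h0 : φ 0 = 0) (heven : ∀ a, φ (-a) = φ a) (n : ℕ) :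
    ∑ i ∈ range n, ∑ j ∈ range n, φ (i - j) =
      2 * ∑ m ∈ range n, ∑ i ∈ range (m + 1), φ i := by
  induction n with
  | zero => simp
  | succ n ih =>
    have hrow : ∑ j ∈ range n, φ ((n : ℤ) - j) = ∑ i ∈ range (n + 1), φ i := by
      rw [sum_range_succ', ← sum_range_reflect]
      simp only [Nat.cast_zero, h0, add_zero]
      refine sum_congr rfl fun j hj ↦ ?_
      have := mem_range.mp hj
      congr 1
      omega
    have hcol : ∑ i ∈ range n, φ ((i : ℤ) - n) = ∑ i ∈ range (n + 1), φ i := by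
      rw [← hrow]
      exact sum_congr rfl fun j _ ↦ by rw [← heven, neg_sub]
    rw [sum_range_succ, sum_congr rfl fun (i : ℕ) _ ↦ sum_range_succ (fun j : ℕ ↦ φ (i - j)) n,
      sum_add_distrib, ih, sum_range_succ (fun j : ℕ ↦ φ ((n : ℤ) - j)), hrow, hcol, sub_self, h0,
      sum_range_succ (fun m ↦ ∑ i ∈ range (m + 1), φ i) n]
    ring

theorem jacobiSym_sub_mul_eq (p q : ℕ) [Fact p.Prime] [Fact q.Prime] (a b : ℤ) :
    jacobiSym (a - b) (p * q) = quadraticChar (ZMod p) ((a : ZMod p) - (b : ZMod p)) *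
      quadraticChar (ZMod q) ((a : ZMod q) - (b : ZMod q)) := by
  rw [jacobiSym.mul_right, ← jacobiSym.legendreSym.to_jacobiSym,
    ← jacobiSym.legendreSym.to_jacobiSym]
  simp [legendreSym]

theorem injOn_natCast_prod_zmod {p q : ℕ} (hpq : p.Coprime q) :
    Set.InjOn (fun j : ℕ ↦ ((j : ZMod p), (j : ZMod q))) (range (p * q)) := by
  intro i hi j hj hij
  rw [Prod.mk.injEq, ZMod.natCast_eq_natCast_iff, ZMod.natCast_eq_natCast_iff] at hij
  exact ((Nat.modEq_and_modEq_iff_modEq_mul hpq).mp hij).eq_of_lt_of_lt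
    (by simpa using hi) (by simpa using hj)

variable {p q : ℕ} [hp : Fact p.Prime] [hq : Fact q.Prime]

theorem sum_jacobiSym_sub_eq_zero (hp2 : p ≠ 2) (hpq : p ≠ q) (a : ℤ) (n : ℕ) :
    ∑ j ∈ range (p * q), jacobiSym (a - (n + j : ℕ)) (p * q) = 0 := by
  have hcop : p.Coprime q := (Nat.coprime_primes hp.out hq.out).mpr hpq
  have himage : (range (p * q)).image (fun j : ℕ ↦ ((j : ZMod p), (j : ZMod q))) = univ := by
    refine eq_univ_of_card _ ?_
    rw [card_image_of_injOn (injOn_natCast_prod_zmod hcop)]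
    simp
  have hchar : ringChar (ZMod p) ≠ 2 := by rwa [ZMod.ringChar_zmod_n]
  calc ∑ j ∈ range (p * q), jacobiSym (a - (n + j : ℕ)) (p * q)
      = ∑ x : ZMod p × ZMod q, quadraticChar (ZMod p) ((a - n : ZMod p) - x.1) *
          quadraticChar (ZMod q) ((a - n : ZMod q) - x.2) := by
        rw [← himage, sum_image (injOn_natCast_prod_zmod hcop)]
        refine sum_congr rfl fun j _ ↦ ?_
        rw [jacobiSym_sub_mul_eq]
        push_cast
        rw [sub_sub, sub_sub]
    _ = 0 := by
        rw [Fintype.sum_prod_type_right]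
        refine sum_eq_zero fun x₂ _ ↦ ?_
        simp only [← sum_mul]
        rw [Fintype.sum_equiv (Equiv.subLeft (a - n : ZMod p))
          (fun x ↦ quadraticChar (ZMod p) ((a - n : ZMod p) - x)) (quadraticChar (ZMod p))
          (fun x ↦ rfl), quadraticChar_sum_zero hchar, zero_mul]

theorem sum_sum_jacobiSym_sub_le (hp2 : p ≠ 2) (hq2 : q ≠ 2) (hpq : p ≠ q) (n : ℕ) :
    ∑ i ∈ range n, ∑ j ∈ range n, (jacobiSym (i - j : ℤ) (p * q) : ℝ) ≤ √(p * q : ℕ) * n := by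
  have hcop : p.Coprime q := (Nat.coprime_primes hp.out hq.out).mpr hpq
  have hpF : ringChar (ZMod p) ≠ 2 := by rwa [ZMod.ringChar_zmod_n]
  have hqF : ringChar (ZMod q) ≠ 2 := by rwa [ZMod.ringChar_zmod_n]
  induction n using Nat.strong_induction_on with
  | _ n ih =>
  rcases le_total n (p * q) with hn | hn
  · have hinj : Set.InjOn (fun j : ℕ ↦ ((j : ZMod p), (j : ZMod q))) (range n) :=
      (injOn_natCast_prod_zmod hcop).mono (by simpa using Set.Iio_subset_Iio hn)
    have h := sum_sum_quadraticChar_le hpF hqF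
      ((range n).image fun j : ℕ ↦ ((j : ZMod p), (j : ZMod q)))
    rw [sum_image hinj, card_image_of_injOn hinj, card_range, ZMod.card, ZMod.card] at h
    rw [Nat.cast_mul]
    refine le_of_eq_of_le (sum_congr rfl fun i _ ↦ ?_) h
    rw [sum_image hinj]
    refine sum_congr rfl fun j _ ↦ ?_
    rw [jacobiSym_sub_mul_eq]
    push_cast
    rfl
  · obtain ⟨m, rfl⟩ := Nat.exists_eq_add_of_le' hn
    have hdrop (a : ℤ) : ∑ j ∈ range (m + p * q), (jacobiSym (a - j) (p * q) : ℝ) =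
        ∑ j ∈ range m, (jacobiSym (a - j) (p * q) : ℝ) := by
      rw [sum_range_add, add_eq_left]
      exact_mod_cast sum_jacobiSym_sub_eq_zero hp2 hpq a m
    have hdrop' (a : ℤ) : ∑ i ∈ range (m + p * q), (jacobiSym (i - a) (p * q) : ℝ) =
        ∑ i ∈ range m, (jacobiSym (i - a) (p * q) : ℝ) := by
      have hneg (i : ℕ) : (jacobiSym (i - a) (p * q) : ℝ) =
          jacobiSym (-1) (p * q) * jacobiSym (a - i) (p * q) := by
        rw [← Int.cast_mul, ← jacobiSym.mul_left, neg_one_mul, neg_sub]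
      simp only [hneg, ← mul_sum, hdrop]
    have hpos : 0 < p * q := Nat.mul_pos hp.out.pos hq.out.pos
    rw [sum_congr rfl fun (i : ℕ) _ ↦ hdrop i, sum_comm,
      sum_congr rfl fun (i : ℕ) _ ↦ hdrop' i, sum_comm]
    refine (ih m (by omega)).trans ?_
    gcongr
    omega

theorem sum_range_sum_jacobiSym_le (hp2 : p ≠ 2) (hq2 : q ≠ 2) (hpq : p ≠ q)
    (h4 : p * q % 4 = 1) (n : ℕ) :
    ∑ m ∈ range n, ∑ i ∈ range (m + 1), (jacobiSym i (p * q) : ℝ) ≤ √(p * q : ℕ) / 2 * n := by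
  have hodd : Odd (p * q) := Nat.odd_iff.mpr (by omega)
  have h1 : 1 < p * q := Nat.one_lt_mul_iff.mpr ⟨hp.out.pos, hq.out.pos, .inl hp.out.one_lt⟩
  have h := sum_sum_sub_eq_two_mul (fun a ↦ (jacobiSym a (p * q) : ℝ))
    (by simp [jacobiSym.zero_left h1])
    (fun a ↦ by simp only [jacobiSym.neg a hodd, ZMod.χ₄_nat_one_mod_four h4, one_mul]) n
  have hle := sum_sum_jacobiSym_sub_le hp2 hq2 hpq n
  linarith

end CharacterSums

section AbelSummation

open Finset Filter Topology NumberField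

theorem sum_range_mul_eq_sum_sum_mul (χ f : ℕ → ℝ) (n : ℕ) :
    ∑ i ∈ range n, χ i * f i =
      (∑ i ∈ range n, χ i) * f n +
        (∑ m ∈ range n, ∑ i ∈ range (m + 1), χ i) * (f n - f (n + 1)) +
        ∑ l ∈ range n, (∑ m ∈ range (l + 1), ∑ i ∈ range (m + 1), χ i) *
          (f l - 2 * f (l + 1) + f (l + 2)) := by
  induction n with
  | zero => simp
  | succ n ih =>
    rw [sum_range_succ, ih,
      sum_range_succ (fun l ↦ (∑ m ∈ range (l + 1), ∑ i ∈ range (m + 1), χ i) * _) n,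
      sum_range_succ (fun m ↦ ∑ i ∈ range (m + 1), χ i) n, sum_range_succ χ n]
    ring

theorem mul_sub_add_sum_Ico_mul (f : ℕ → ℝ) {M n : ℕ} (h : M ≤ n) :
    n * (f n - f (n + 1)) + ∑ l ∈ Ico M n, (l + 1) * (f l - 2 * f (l + 1) + f (l + 2)) =
      (M + 1) * (f M - f (M + 1)) + f (M + 1) - f n := by
  induction n, h using Nat.le_induction with
  | base => simp; ring
  | succ n hn ih =>
    rw [sum_Ico_succ_top hn]
    push_cast
    linear_combination ih

theorem sum_range_mul_le (χ f U : ℕ → ℝ) {A : ℝ} (hA : 0 ≤ A) (hχ0 : χ 0 = 0)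
    (hχ : ∀ n, |χ n| ≤ 1) (hf : ∀ n, 0 ≤ f n) (hfmono : ∀ n, 1 ≤ n → f (n + 1) ≤ f n)
    (hfconv : ∀ n, 1 ≤ n → 0 ≤ f n - 2 * f (n + 1) + f (n + 2)) {N n : ℕ} (hn : N + 1 ≤ n)
    (hA' : ∀ n : ℕ, ∑ m ∈ range n, ∑ i ∈ range (m + 1), χ i ≤ A * n)
    (hU : ∀ n < N, ∑ m ∈ range (n + 2), ∑ i ∈ range (m + 1), χ i ≤ U (n + 1)) :
    ∑ i ∈ range n, χ i * f i ≤ n * f n +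
      (∑ l ∈ range N, U (l + 1) * (f (l + 1) - 2 * f (l + 2) + f (l + 3)) +
        A * ((N + 2) * (f (N + 1) - f (N + 2)) + f (N + 2))) := by
  rw [sum_range_mul_eq_sum_sum_mul, ← sum_range_add_sum_Ico
    (fun l ↦ (∑ m ∈ range (l + 1), ∑ i ∈ range (m + 1), χ i) * _) hn, sum_range_succ' (n := N)]
  have h1 : (∑ i ∈ range n, χ i) * f n ≤ n * f n := by
    refine mul_le_mul_of_nonneg_right ((sum_le_sum fun i _ ↦ le_of_abs_le (hχ i)).trans ?_) (hf n)
    simp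
  have h2 : (∑ m ∈ range n, ∑ i ∈ range (m + 1), χ i) * (f n - f (n + 1)) ≤
      A * n * (f n - f (n + 1)) :=
    mul_le_mul_of_nonneg_right (hA' n) (sub_nonneg.mpr (hfmono n (by omega)))
  have h3 : ∑ l ∈ range N, (∑ m ∈ range (l + 1 + 1), ∑ i ∈ range (m + 1), χ i) *
      (f (l + 1) - 2 * f (l + 1 + 1) + f (l + 1 + 2)) ≤
      ∑ l ∈ range N, U (l + 1) * (f (l + 1) - 2 * f (l + 2) + f (l + 3)) :=
    sum_le_sum fun l hl ↦ mul_le_mul_of_nonneg_right (hU l (mem_range.mp hl))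
      (hfconv (l + 1) (by omega))
  have h4 : ∑ l ∈ Ico (N + 1) n, (∑ m ∈ range (l + 1), ∑ i ∈ range (m + 1), χ i) *
      (f l - 2 * f (l + 1) + f (l + 2)) ≤
      A * ∑ l ∈ Ico (N + 1) n, (l + 1) * (f l - 2 * f (l + 1) + f (l + 2)) := by
    rw [mul_sum]
    refine sum_le_sum fun l hl ↦ ?_
    rw [← mul_assoc]
    refine mul_le_mul_of_nonneg_right (by simpa using hA' (l + 1))
      (hfconv l (by have := (mem_Ico.mp hl).1; omega))
  have h5 := mul_sub_add_sum_Ico_mul f hn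
  push_cast at h5
  have h6 : A * (n * (f n - f (n + 1)) +
      ∑ l ∈ Ico (N + 1) n, (l + 1) * (f l - 2 * f (l + 1) + f (l + 2))) ≤
      A * ((N + 2) * (f (N + 1) - f (N + 2)) + f (N + 2)) := by
    rw [h5]
    refine mul_le_mul_of_nonneg_left ?_ hA
    have := hf n
    ring_nf at this ⊢
    linarith
  simp only [zero_add, range_one, sum_singleton, hχ0, zero_mul, add_zero]
  linarith

theorem rpow_neg_convex_nat {s : ℝ} (hs : 0 ≤ s) {n : ℕ} (hn : 1 ≤ n) :
    0 ≤ ((n : ℝ) ^ s)⁻¹ - 2 * (((n + 1 : ℕ) : ℝ) ^ s)⁻¹ + (((n + 2 : ℕ) : ℝ) ^ s)⁻¹ := by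
  have hn0 : (0 : ℝ) < n := by exact_mod_cast hn
  have hle : (n : ℝ) ^ s * ((n + 2 : ℕ) : ℝ) ^ s ≤
      ((n + 1 : ℕ) : ℝ) ^ s * ((n + 1 : ℕ) : ℝ) ^ s := by
    rw [← Real.mul_rpow (by positivity) (by positivity),
      ← Real.mul_rpow (by positivity) (by positivity)]
    refine Real.rpow_le_rpow (by positivity) ?_ hs
    push_cast
    nlinarith
  have ha : 0 < (n : ℝ) ^ s := by positivity
  have hb : 0 < ((n + 2 : ℕ) : ℝ) ^ s := by positivity
  have hc : 0 < ((n + 1 : ℕ) : ℝ) ^ s := by positivity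
  have hinv := inv_anti₀ (by positivity) hle
  rw [mul_inv, mul_inv] at hinv
  set a := ((n : ℝ) ^ s)⁻¹
  set b := (((n + 2 : ℕ) : ℝ) ^ s)⁻¹
  set c := (((n + 1 : ℕ) : ℝ) ^ s)⁻¹
  have ha' : 0 < a := by positivity
  have hb' : 0 < b := by positivity
  have hc' : 0 < c := by positivity
  have : 2 * c ≤ a + b := by
    refine abs_le_of_sq_le_sq' ?_ (by positivity) |>.2
    nlinarith [sq_nonneg (a - b)]
  linarith

theorem tsum_div_rpow_le (χ U : ℕ → ℝ) {A : ℝ} (hA : 0 ≤ A) (hχ0 : χ 0 = 0)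
    (hχ : ∀ n, |χ n| ≤ 1) {N : ℕ}
    (hA' : ∀ n : ℕ, ∑ m ∈ range n, ∑ i ∈ range (m + 1), χ i ≤ A * n)
    (hU : ∀ n < N, ∑ m ∈ range (n + 2), ∑ i ∈ range (m + 1), χ i ≤ U (n + 1)) {s : ℝ} (hs : 1 < s) :
    ∑' n : ℕ, χ n / (n : ℝ) ^ s ≤
      ∑ l ∈ range N, U (l + 1) * ((((l + 1 : ℕ) : ℝ) ^ s)⁻¹ - 2 * (((l + 2 : ℕ) : ℝ) ^ s)⁻¹ +
        (((l + 3 : ℕ) : ℝ) ^ s)⁻¹) +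
        A * ((N + 2) * ((((N + 1 : ℕ) : ℝ) ^ s)⁻¹ - (((N + 2 : ℕ) : ℝ) ^ s)⁻¹) +
          (((N + 2 : ℕ) : ℝ) ^ s)⁻¹) := by
  have hsumm : Summable fun n : ℕ ↦ χ n / (n : ℝ) ^ s := by
    refine Summable.of_norm_bounded (Real.summable_one_div_nat_rpow.mpr hs) fun n ↦ ?_
    rw [norm_div, Real.norm_eq_abs, Real.norm_of_nonneg (by positivity : 0 ≤ (n : ℝ) ^ s)]
    exact div_le_div_of_nonneg_right (hχ n) (by positivity)
  have hzero : Tendsto (fun n : ℕ ↦ (n : ℝ) * ((n : ℝ) ^ s)⁻¹) atTop (𝓝 0) := by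
    have h := (tendsto_rpow_neg_atTop (sub_pos.mpr hs)).comp tendsto_natCast_atTop_atTop
    refine h.congr' ?_
    filter_upwards [eventually_ge_atTop 1] with n hn
    have hn0 : (0 : ℝ) < n := by exact_mod_cast hn
    simp only [Function.comp_apply]
    rw [neg_sub, Real.rpow_sub hn0, Real.rpow_one, div_eq_mul_inv]
  have hlim := hzero.add_const (∑ l ∈ range N, U (l + 1) * ((((l + 1 : ℕ) : ℝ) ^ s)⁻¹ -
    2 * (((l + 2 : ℕ) : ℝ) ^ s)⁻¹ + (((l + 3 : ℕ) : ℝ) ^ s)⁻¹) +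
        A * ((N + 2) * ((((N + 1 : ℕ) : ℝ) ^ s)⁻¹ - (((N + 2 : ℕ) : ℝ) ^ s)⁻¹) +
          (((N + 2 : ℕ) : ℝ) ^ s)⁻¹))
  rw [zero_add] at hlim
  refine le_of_tendsto_of_tendsto hsumm.hasSum.tendsto_sum_nat hlim ?_
  filter_upwards [eventually_ge_atTop (N + 1)] with n hn
  simp only [div_eq_mul_inv]
  refine sum_range_mul_le χ (fun n ↦ ((n : ℝ) ^ s)⁻¹) U hA hχ0 hχ (fun n ↦ by positivity)
    (fun n hn ↦ ?_) (fun n hn ↦ rpow_neg_convex_nat (by linarith) hn) hn hA' hU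
  have hn0 : (0 : ℝ) < n := by exact_mod_cast hn
  refine inv_anti₀ (by positivity) (Real.rpow_le_rpow hn0.le (by simp) (by linarith))

theorem dedekindZeta_residue_le_sum (K : Type*) [Field K] [NumberField K] (χ U : ℕ → ℝ) {A : ℝ}
    (hA : 0 ≤ A) (hχ0 : χ 0 = 0) (hχ : ∀ n, |χ n| ≤ 1)
    (hcard : ∀ n : ℕ, n ≠ 0 →
      (Nat.card {I : Ideal (𝓞 K) // Ideal.absNorm I = n} : ℝ) ≤ ∑ d ∈ n.divisors, χ d) {N : ℕ}
    (hA' : ∀ n : ℕ, ∑ m ∈ range n, ∑ i ∈ range (m + 1), χ i ≤ A * n)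
    (hU : ∀ n < N, ∑ m ∈ range (n + 2), ∑ i ∈ range (m + 1), χ i ≤ U (n + 1)) :
    dedekindZeta_residue K ≤ ∑ l ∈ range N, U (l + 1) * (2 / ((l + 1) * (l + 2) * (l + 3))) +
      A * (1 / (N + 1) + 1 / (N + 2)) := by
  have hinv (n : ℕ) : Tendsto (fun s : ℝ ↦ (((n + 1 : ℕ) : ℝ) ^ s)⁻¹) (𝓝[>] 1)
      (𝓝 ((n + 1 : ℝ)⁻¹)) := by
    have hpos : (0 : ℝ) < (n + 1 : ℕ) := by positivity
    have h : ContinuousAt (fun s : ℝ ↦ (((n + 1 : ℕ) : ℝ) ^ s)⁻¹) 1 :=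
      (Real.continuousAt_const_rpow hpos.ne').inv₀ (by positivity)
    simpa using h.tendsto.mono_left nhdsWithin_le_nhds
  have hlim := (tendsto_finsetSum (range N) fun l _ ↦
    (((hinv l).sub ((hinv (l + 1)).const_mul 2)).add (hinv (l + 2))).const_mul (U (l + 1))).add
    (((((hinv N).sub (hinv (N + 1))).const_mul ((N : ℝ) + 2)).add (hinv (N + 1))).const_mul A)
  refine (dedekindZeta_residue_le_of_card_le K χ hχ0 hχ hcard
    (fun s hs ↦ tsum_div_rpow_le χ U hA hχ0 hχ hA' hU hs) hlim).trans_eq ?_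
  congr 1
  · refine sum_congr rfl fun l _ ↦ ?_
    push_cast
    field_simp
    ring
  · push_cast
    field_simp
    ring

end AbelSummation

section PartialSums

open Finset

theorem sum_range_two_mul_of_even_neg {χ : ℕ → ℝ} (h2 : ∀ n, χ (2 * n) = -χ n) (n : ℕ) :
    ∑ i ∈ range (2 * n), χ i = ∑ j ∈ range n, χ (2 * j + 1) - ∑ i ∈ range n, χ i := by
  induction n with
  | zero => simp
  | succ n ih =>
    rw [mul_add, mul_one, sum_range_succ, sum_range_succ, ih, h2, sum_range_succ _ n,
      sum_range_succ _ n]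
    ring

theorem sum_range_two_mul_add_one_of_even_neg {χ : ℕ → ℝ} (h2 : ∀ n, χ (2 * n) = -χ n) (n : ℕ) :
    ∑ i ∈ range (2 * n + 1), χ i = ∑ j ∈ range n, χ (2 * j + 1) - ∑ i ∈ range (n + 1), χ i := by
  rw [sum_range_succ, sum_range_two_mul_of_even_neg h2, h2, sum_range_succ χ n]
  ring

theorem sum_range_le_half {χ : ℕ → ℝ} (h0 : χ 0 = 0) (h2 : ∀ n, χ (2 * n) = -χ n)
    (hχ : ∀ n, χ n ≤ 1) (n : ℕ) : ∑ i ∈ range n, χ i ≤ n / 2 := by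
  have hodd (a b : ℕ) : ∑ j ∈ range (a + b), χ (2 * j + 1) ≤ ∑ j ∈ range a, χ (2 * j + 1) + b := by
    rw [sum_range_add]
    gcongr
    exact (sum_le_sum fun j _ ↦ hχ _).trans (by simp)
  induction n using Nat.strong_induction_on with
  | _ n ih =>
  rcases lt_or_ge n 3 with hn | hn
  · interval_cases n
    · simp
    · simp [h0]
    · simpa [sum_range_succ, h0] using hχ 1
  obtain ⟨a, ha | ha | ha | ha⟩ : ∃ a, n = 4 * a ∨ n = 4 * a + 1 ∨ n = 4 * a + 2 ∨ n = 4 * a + 3 :=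
    ⟨n / 4, by omega⟩
  · have h := ih a (by omega)
    have ho := hodd a a
    rw [ha, show 4 * a = 2 * (a + a) by ring, sum_range_two_mul_of_even_neg h2, ← two_mul a,
      sum_range_two_mul_of_even_neg h2, two_mul a]
    push_cast
    have : (0 : ℝ) ≤ a := by positivity
    linarith
  · have h := ih (a + 1) (by omega)
    have ho := hodd a a
    rw [ha, show 4 * a + 1 = 2 * (a + a) + 1 by ring, sum_range_two_mul_add_one_of_even_neg h2,
      ← two_mul a, sum_range_two_mul_add_one_of_even_neg h2, two_mul a]
    push_cast at h ⊢
    have : (0 : ℝ) ≤ a := by positivity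
    linarith
  · have h := ih (a + 1) (by omega)
    have ho := hodd a (a + 1)
    rw [ha, show 4 * a + 2 = 2 * (2 * a + 1) by ring, sum_range_two_mul_of_even_neg h2,
      sum_range_two_mul_add_one_of_even_neg h2, two_mul a, add_assoc]
    push_cast at h ho ⊢
    have : (1 : ℝ) ≤ a := by exact_mod_cast (by omega : 1 ≤ a)
    linarith
  · have h := ih (a + 1) (by omega)
    have ho := hodd (a + 1) a
    rw [ha, show 4 * a + 3 = 2 * (2 * a + 1) + 1 by ring, sum_range_two_mul_add_one_of_even_neg h2,
      show 2 * a + 1 + 1 = 2 * (a + 1) by ring, sum_range_two_mul_of_even_neg h2,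
      show 2 * a + 1 = a + 1 + a by ring]
    push_cast at h ho ⊢
    have : (0 : ℝ) ≤ a := by positivity
    linarith

theorem sum_range_sum_le {χ : ℕ → ℝ} (h0 : χ 0 = 0) (hχ : ∀ n, χ n ≤ 1) (n : ℕ) :
    ∑ m ∈ range (n + 1), ∑ i ∈ range (m + 1), χ i ≤ n * (n + 1) / 2 := by
  have hS (m : ℕ) : ∑ i ∈ range (m + 1), χ i ≤ m := by
    rw [sum_range_succ', h0, add_zero]
    exact (sum_le_sum fun i _ ↦ hχ _).trans (by simp)
  induction n with
  | zero => simp [h0]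
  | succ n ih =>
    rw [sum_range_succ]
    have := hS (n + 1)
    push_cast at this ⊢
    linarith

theorem sum_range_sum_le_of_even_neg {χ : ℕ → ℝ} (h0 : χ 0 = 0) (h2 : ∀ n, χ (2 * n) = -χ n)
    (hχ : ∀ n, χ n ≤ 1) (n : ℕ) :
    ∑ m ∈ range (n + 1), ∑ i ∈ range (m + 1), χ i ≤ n * (n + 3) / 4 := by
  induction n with
  | zero => simp [h0]
  | succ n ih =>
    rw [sum_range_succ]
    have := sum_range_le_half h0 h2 hχ (n + 1 + 1)
    push_cast at this ⊢
    linarith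

theorem one_div_le_log_add_one_div {x : ℝ} (hx : 0 < x) :
    1 / (x + 1) ≤ Real.log (x + 1) - Real.log x := by
  rw [← Real.log_div (by positivity) hx.ne']
  refine le_trans (le_of_eq ?_) (Real.one_sub_inv_le_log_of_pos (by positivity))
  field_simp
  ring

theorem sum_triangle_le_log (N : ℕ) :
    ∑ l ∈ range N, ((l + 1 : ℕ) * ((l + 1 : ℕ) + 1) / 2 : ℝ) * (2 / ((l + 1) * (l + 2) * (l + 3))) ≤
      Real.log ((N + 2) / 2) := by
  rw [Real.log_div (by positivity) (by positivity)]
  induction N with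
  | zero => simp
  | succ N ih =>
    rw [sum_range_succ]
    have h := one_div_le_log_add_one_div (x := N + 2) (by positivity)
    have heq : ((N + 1 : ℕ) * ((N + 1 : ℕ) + 1) / 2 : ℝ) * (2 / ((N + 1) * (N + 2) * (N + 3))) =
        1 / (N + 2 + 1) := by
      push_cast
      field_simp
      ring
    rw [heq]
    push_cast at ih ⊢
    rw [show (N : ℝ) + 1 + 2 = N + 2 + 1 by ring]
    linarith

theorem sum_quarter_le_log (N : ℕ) :
    ∑ l ∈ range N, ((l + 1 : ℕ) * ((l + 1 : ℕ) + 3) / 4 : ℝ) * (2 / ((l + 1) * (l + 2) * (l + 3))) ≤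
      Real.log (N + 1) / 2 + 1 / 4 := by
  suffices ∑ l ∈ range N, ((l + 1 : ℕ) * ((l + 1 : ℕ) + 3) / 4 : ℝ) *
      (2 / ((l + 1) * (l + 2) * (l + 3))) ≤ Real.log (N + 1) / 2 + 1 / 4 - 1 / (2 * (N + 2)) by
    have : (0 : ℝ) ≤ 1 / (2 * (N + 2)) := by positivity
    linarith
  induction N with
  | zero => norm_num
  | succ N ih =>
    rw [sum_range_succ]
    have h := one_div_le_log_add_one_div (x := N + 1) (by positivity)
    have heq : ((N + 1 : ℕ) * ((N + 1 : ℕ) + 3) / 4 : ℝ) * (2 / ((N + 1) * (N + 2) * (N + 3))) =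
        1 / (N + 1 + 1) / 2 + 1 / (2 * (N + 2)) - 1 / (2 * (N + 1 + 2)) := by
      push_cast
      field_simp
      ring
    rw [heq]
    push_cast at ih ⊢
    linarith

end PartialSums

section Regulator

open NumberField InfinitePlace Units

theorem torsionOrder_le_two_of_nrRealPlaces_ne_zero (K : Type*) [Field K] [NumberField K]
    (h : nrRealPlaces K ≠ 0) : torsionOrder K ≤ 2 := by
  by_contra! hlt
  obtain ⟨μ, hμ⟩ : ∃ μ : torsion K, orderOf μ = torsionOrder K := by
    rw [torsionOrder]
    exact IsCyclic.exists_ofOrder_eq_natCard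
  rw [← IsPrimitiveRoot.iff_orderOf, ← IsPrimitiveRoot.coe_submonoidClass_iff,
    ← IsPrimitiveRoot.coe_units_iff] at hμ
  exact h (IsPrimitiveRoot.nrRealPlaces_eq_zero_of_two_lt hlt
    (hμ.map_of_injective (FaithfulSMul.algebraMap_injective (𝓞 K) K)))

theorem nrComplexPlaces_eq_zero_of_discr_pos {K : Type*} [Field K] [NumberField K]
    (hdeg : Module.finrank ℚ K = 2) (hpos : 0 < discr K) :
    nrRealPlaces K = 2 ∧ nrComplexPlaces K = 0 := by
  have h := card_add_two_mul_card_eq_rank K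
  have hs := sign_discr K
  rw [Int.sign_eq_one_of_pos hpos, eq_comm, neg_one_pow_eq_one_iff_even (by norm_num)] at hs
  obtain ⟨c, hc⟩ := hs
  omega

theorem log_sub_one_le_abs_log {x c : ℝ} (hx : 0 < x) (hc : 1 < c) (h : c ≤ x + x⁻¹) :
    Real.log (c - 1) ≤ |Real.log x| := by
  wlog hx1 : 1 ≤ x generalizing x
  · have := this (inv_pos.mpr hx) (by rwa [inv_inv, add_comm])
      ((one_le_inv₀ hx).mpr (not_le.mp hx1).le)
    rwa [Real.log_inv, abs_neg] at this
  · refine (Real.log_le_log (by linarith) ?_).trans (le_abs_self _)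
    linarith [inv_le_one_of_one_le₀ hx1]

theorem QuadraticConj.norm_isUnit {R : Type*} [CommRing R] [CharZero R] {D : ℤ}
    (q : QuadraticConj R D) (u : Rˣ) : IsUnit (q.norm u) := by
  refine IsUnit.of_mul_eq_one (q.norm (u⁻¹ : Rˣ)) ?_
  apply Int.cast_injective (α := R)
  push_cast
  rw [← q.mul_conj, ← q.mul_conj]
  have h : q.σ u * q.σ (u⁻¹ : Rˣ) = 1 := by rw [← map_mul, Units.mul_inv, map_one]
  linear_combination (u : R) * (u⁻¹ : Rˣ) * h + Units.mul_inv u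

theorem QuadraticConj.exists_log_le {R : Type*} [CommRing R] [CharZero R] {D : ℤ}
    (q : QuadraticConj R D) (hD : 1 < D) (hodd : Odd D) (φ : R →+* ℝ) (u : Rˣ)
    (hu : Real.log |φ u| ≠ 0) :
    ∃ t : ℤ, t ≠ 0 ∧ (D % 8 = 1 → Even t) ∧ Real.log (|t| * √D - 1) ≤ |Real.log (|φ u|)| := by
  have hnorm := q.norm_isUnit u
  have habs : |φ u| * |φ (q.σ u)| = 1 := by
    rw [← abs_mul, ← map_mul, q.mul_conj, map_intCast]
    rcases Int.isUnit_iff.mp hnorm with h | h <;> simp [h]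
  have hsub : |φ u - φ (q.σ u)| = |q.coef u| * √D := by
    rw [← map_sub, q.sub_conj, map_mul, map_intCast, abs_mul]
    congr 1
    · push_cast; rfl
    · rw [← Real.sqrt_sq_eq_abs, ← map_pow, q.sq_δ, map_intCast]
  have ht : q.coef u ≠ 0 := by
    intro h0
    rw [h0] at hsub
    have heq : φ u = φ (q.σ u) := by simpa [sub_eq_zero] using hsub
    rw [← heq] at habs
    have : |φ u| = 1 := by nlinarith [abs_nonneg (φ u)]
    simp [this] at hu
  refine ⟨q.coef u, ht, fun h8 ↦ ?_, ?_⟩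
  · by_contra hc
    rw [Int.not_even_iff_odd] at hc
    have := (emod_eight_eq_one_iff_even (q.trace_sq_sub u) hc hodd).mp h8
    rcases Int.isUnit_iff.mp hnorm with h | h <;> simp [h, parity_simps] at this
  · have hpos : 0 < |φ u| := by
      rcases (abs_nonneg (φ u)).eq_or_lt with h | h
      · rw [← h] at habs; simp at habs
      · exact h
    refine log_sub_one_le_abs_log hpos ?_ ?_
    · have h1 : (1 : ℝ) ≤ |q.coef u| := by exact_mod_cast Int.one_le_abs ht
      have h2 : 1 < √(D : ℝ) := by
        rw [Real.lt_sqrt (by norm_num), one_pow]; exact_mod_cast hD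
      push_cast at h1 ⊢
      nlinarith
    · rw [← hsub, ← eq_inv_of_mul_eq_one_right habs]
      exact abs_sub _ _

theorem exists_log_le_regulator {K : Type*} [Field K] [NumberField K]
    (hdeg : Module.finrank ℚ K = 2) (hD : 1 < discr K) (hodd : Odd (discr K)) :
    ∃ t : ℤ, t ≠ 0 ∧ (discr K % 8 = 1 → Even t) ∧
      Real.log (|t| * √(discr K) - 1) ≤ regulator K := by
  classical
  obtain ⟨hr, hc⟩ := nrComplexPlaces_eq_zero_of_discr_pos hdeg (by linarith)
  have hreal : IsTotallyReal K := nrComplexPlaces_eq_zero_iff.mp hc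
  have hcard : Fintype.card (InfinitePlace K) = 2 := by
    rw [card_eq_nrRealPlaces_add_nrComplexPlaces, hr, hc]
  have hrank : rank K = 1 := by rw [rank, hcard]
  obtain ⟨w'⟩ : Nonempty (InfinitePlace K) := inferInstance
  obtain ⟨w, hw, huniv⟩ := (Nat.card_eq_two_iff' w').mp (Nat.card_eq_fintype_card.trans hcard)
  let : Unique {w // w ≠ w'} := ⟨⟨⟨w, hw⟩⟩, fun v ↦ Subtype.ext (huniv v v.2)⟩
  let e : {w // w ≠ w'} ≃ Fin (rank K) := (Equiv.ofUnique _ (Fin 1)).trans (finCongr hrank.symm)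
  obtain ⟨q⟩ := nonempty_quadraticConj K hdeg
  have hwreal : w.IsReal := hreal.isReal w
  set u := fundSystem K (e ⟨w, hw⟩) with hu
  set φ : 𝓞 K →+* ℝ := (embedding_of_isReal hwreal).comp (algebraMap (𝓞 K) K) with hφ
  have hval : |φ u| = w (u : K) := norm_embedding_of_isReal hwreal _
  have hreg : regulator K = |Real.log (|φ u|)| := by
    rw [regulator_eq_det K w' e, Matrix.det_unique, hval]
    simp only [Matrix.of_apply, IsTotallyReal.mult_eq, Nat.cast_one, one_mul]
    rfl
  obtain ⟨t, ht, h8, hle⟩ := q.exists_log_le hD hodd φ u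
    (fun h ↦ regulator_ne_zero K (by rw [hreg, h, abs_zero]))
  exact ⟨t, ht, h8, hreg ▸ hle⟩

end Regulator

section ClassNumberBound

open NumberField InfinitePlace Units Finset

theorem jacobiSym_eq_one_or_no_prime_ideal {R : Type*} [CommRing R] [IsDedekindDomain R]
    [Module.Free ℤ R] [Module.Finite ℤ R] [CharZero R] {k : ℕ} (hk4 : k % 4 = 1)
    (q : QuadraticConj R k) (p : ℕ) (hp : p.Prime) :
    jacobiSym p k = 1 ∨ (jacobiSym p k = 0 ∧ (p : ℤ) ∣ k) ∨
      (jacobiSym p k = -1 ∧ ∀ P : Ideal R, Ideal.absNorm P ≠ p) := by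
  have hkodd : Odd k := Nat.odd_iff.mpr (by omega)
  rcases jacobiSym.trichotomy p k with h | h | h
  · refine .inr (.inl ⟨h, ?_⟩)
    have hgcd := (jacobiSym.eq_zero_iff.mp h).2
    by_contra hdvd
    exact hgcd (Int.isCoprime_iff_gcd_eq_one.mp
      ((Nat.isCoprime_iff_coprime.mpr ((hp.coprime_iff_not_dvd).mpr
        fun h ↦ hdvd (Int.natCast_dvd_natCast.mpr h)))))
  · exact .inl h
  · refine .inr (.inr ⟨h, fun P hP ↦ ?_⟩)
    rcases hp.eq_two_or_odd' with rfl | hodd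
    · have h8 := q.emod_eight_of_absNorm_eq_two hP (by exact_mod_cast hkodd)
      rw [Nat.cast_ofNat, jacobiSym.at_two hkodd, ZMod.χ₈_nat_eq_if_mod_eight] at h
      split_ifs at h
      omega
    · have : Fact p.Prime := ⟨hp⟩
      rw [jacobiSym.quadratic_reciprocity_one_mod_four' hodd hk4,
        ← jacobiSym.legendreSym.to_jacobiSym, legendreSym.eq_neg_one_iff] at h
      exact h (q.isSquare_of_absNorm_eq hp hP)

section Residue

variable {K : Type*} [Field K] [NumberField K] {p q : ℕ} [hp : Fact p.Prime] [hq : Fact q.Prime]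

theorem card_absNorm_le_sum_jacobiSym {k : ℕ} (hk1 : 1 < k) (hk4 : k % 4 = 1)
    (hdeg : Module.finrank ℚ K = 2) (hdisc : discr K = k) {n : ℕ} (hn : n ≠ 0) :
    (Nat.card {I : Ideal (𝓞 K) // Ideal.absNorm I = n} : ℝ) ≤
      ∑ d ∈ n.divisors, (jacobiSym d k : ℝ) := by
  obtain ⟨c⟩ := nonempty_quadraticConj K hdeg
  rw [hdisc] at c
  let χ : ℕ →*₀ ℤ :=
    { toFun n := jacobiSym n k
      map_zero' := by simpa using jacobiSym.zero_left hk1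
      map_one' := by simp
      map_mul' a b := by rw [Nat.cast_mul, jacobiSym.mul_left] }
  have h := c.card_absNorm_le_sum_divisors ((RingOfIntegers.rank K).trans hdeg) χ
    (jacobiSym_eq_one_or_no_prime_ideal hk4 c) hn
  exact_mod_cast h

theorem abs_jacobiSym_le_one (a : ℤ) (b : ℕ) : |(jacobiSym a b : ℝ)| ≤ 1 := by
  rcases jacobiSym.trichotomy a b with h | h | h <;> simp [h]

theorem dedekindZeta_residue_le_sum_add_one (hp2 : p ≠ 2) (hq2 : q ≠ 2) (hpq : p ≠ q)
    (h4 : p * q % 4 = 1) (hdeg : Module.finrank ℚ K = 2) (hdisc : discr K = (p * q : ℕ))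
    (U : ℕ → ℝ)
    (hU : ∀ n : ℕ, ∑ m ∈ range (n + 1), ∑ i ∈ range (m + 1), (jacobiSym i (p * q) : ℝ) ≤ U n) :
    dedekindZeta_residue K ≤
      ∑ l ∈ range ⌊√(p * q : ℕ)⌋₊, U (l + 1) * (2 / ((l + 1) * (l + 2) * (l + 3))) + 1 := by
  have h1 : 1 < p * q := Nat.one_lt_mul_iff.mpr ⟨hp.out.pos, hq.out.pos, .inl hp.out.one_lt⟩
  refine (dedekindZeta_residue_le_sum K (fun n ↦ (jacobiSym n (p * q) : ℝ)) U
    (A := √(p * q : ℕ) / 2) (N := ⌊√(p * q : ℕ)⌋₊) (by positivity)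
    (by simp [jacobiSym.zero_left h1]) (fun n ↦ abs_jacobiSym_le_one _ _)
    (fun n hn ↦ card_absNorm_le_sum_jacobiSym h1 h4 hdeg hdisc hn)
    (sum_range_sum_jacobiSym_le hp2 hq2 hpq h4) fun n _ ↦ hU (n + 1)).trans ?_
  gcongr
  set s := √(p * q : ℕ)
  have hs : 0 < s := by positivity
  have hfloor : s < ⌊s⌋₊ + 1 := Nat.lt_floor_add_one s
  have hle₁ : 1 / ((⌊s⌋₊ : ℝ) + 1) ≤ 1 / s := by gcongr
  have hle₂ : 1 / ((⌊s⌋₊ : ℝ) + 2) ≤ 1 / s := by gcongr; linarith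
  calc s / 2 * (1 / ((⌊s⌋₊ : ℝ) + 1) + 1 / (⌊s⌋₊ + 2)) ≤ s / 2 * (1 / s + 1 / s) := by gcongr
    _ = 1 := by field_simp; norm_num

theorem dedekindZeta_residue_le_log (hp2 : p ≠ 2) (hq2 : q ≠ 2) (hpq : p ≠ q)
    (h4 : p * q % 4 = 1) (hdeg : Module.finrank ℚ K = 2) (hdisc : discr K = (p * q : ℕ)) :
    dedekindZeta_residue K ≤ Real.log ((√(p * q : ℕ) + 2) / 2) + 1 := by
  have h1 : 1 < p * q := Nat.one_lt_mul_iff.mpr ⟨hp.out.pos, hq.out.pos, .inl hp.out.one_lt⟩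
  refine (dedekindZeta_residue_le_sum_add_one hp2 hq2 hpq h4 hdeg hdisc (fun n ↦ n * (n + 1) / 2)
    (sum_range_sum_le (by simp [jacobiSym.zero_left h1])
      fun n ↦ le_of_abs_le (abs_jacobiSym_le_one _ _))).trans ?_
  gcongr
  refine (sum_triangle_le_log _).trans (Real.log_le_log (by positivity) ?_)
  gcongr
  exact Nat.floor_le (by positivity)

theorem dedekindZeta_residue_le_half_log (hp2 : p ≠ 2) (hq2 : q ≠ 2) (hpq : p ≠ q)
    (h8 : p * q % 8 = 5) (hdeg : Module.finrank ℚ K = 2) (hdisc : discr K = (p * q : ℕ)) :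
    dedekindZeta_residue K ≤ Real.log (√(p * q : ℕ) + 1) / 2 + 5 / 4 := by
  have h1 : 1 < p * q := Nat.one_lt_mul_iff.mpr ⟨hp.out.pos, hq.out.pos, .inl hp.out.one_lt⟩
  have htwo : jacobiSym 2 (p * q) = -1 := by
    rw [jacobiSym.at_two (Nat.odd_iff.mpr (by omega)), ZMod.χ₈_nat_eq_if_mod_eight]
    split_ifs <;> omega
  refine (dedekindZeta_residue_le_sum_add_one hp2 hq2 hpq (by omega) hdeg hdisc
    (fun n ↦ n * (n + 3) / 4) (sum_range_sum_le_of_even_neg (by simp [jacobiSym.zero_left h1])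
      (fun n ↦ by simp [jacobiSym.mul_left, htwo])
      fun n ↦ le_of_abs_le (abs_jacobiSym_le_one _ _))).trans ?_
  have h := sum_quarter_le_log ⌊√(p * q : ℕ)⌋₊
  have hlog : Real.log ((⌊√(p * q : ℕ)⌋₊ : ℝ) + 1) ≤ Real.log (√(p * q : ℕ) + 1) := by
    refine Real.log_le_log (by positivity) ?_
    gcongr
    exact Nat.floor_le (by positivity)
  linarith

end Residue

theorem classNumber_mul_regulator_le {K : Type*} [Field K] [NumberField K]
    (hdeg : Module.finrank ℚ K = 2) (hpos : 0 < discr K) :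
    2 * (regulator K * classNumber K) ≤ √(discr K) * dedekindZeta_residue K := by
  obtain ⟨hr, hc⟩ := nrComplexPlaces_eq_zero_of_discr_pos hdeg hpos
  have hw : (torsionOrder K : ℝ) ≤ 2 := by
    exact_mod_cast torsionOrder_le_two_of_nrRealPlaces_ne_zero K (by omega)
  have hw0 : (0 : ℝ) < torsionOrder K := by exact_mod_cast torsionOrder_pos K
  have hs : 0 < √(discr K : ℝ) := Real.sqrt_pos.mpr (by exact_mod_cast hpos)
  have hR := regulator_pos K
  rw [dedekindZeta_residue_def, hr, hc, abs_of_pos (Int.cast_pos.mpr hpos), pow_zero, mul_one,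
    mul_comm (torsionOrder K : ℝ), ← mul_div_assoc, mul_div_mul_left _ _ hs.ne', le_div_iff₀ hw0]
  have : 0 ≤ regulator K * classNumber K := by positivity
  nlinarith

theorem log_half_add_one_le {s r : ℝ} (hs : 0 < s) (h : (s + 2) * 1.36 ≤ r) :
    Real.log ((s + 2) / 2) + 1 ≤ Real.log r := by
  rw [← Real.log_exp 1, ← Real.log_mul (by positivity) (by positivity)]
  refine Real.log_le_log (by positivity) (le_trans ?_ h)
  have := Real.exp_one_lt_d9
  nlinarith

theorem half_log_add_le {s : ℝ} (hs : 27 ≤ s) :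
    Real.log (s + 1) / 2 + 5 / 4 ≤ Real.log (s - 1) := by
  suffices Real.log (s + 1) + 5 / 2 ≤ 2 * Real.log (s - 1) by linarith
  have hexp : Real.exp (5 / 2) ≤ 20.1 := by
    calc Real.exp (5 / 2) ≤ Real.exp 3 := Real.exp_le_exp.mpr (by norm_num)
      _ = Real.exp 1 ^ 3 := by rw [← Real.exp_nat_mul]; norm_num
      _ ≤ 2.7182818286 ^ 3 := by gcongr; exact Real.exp_one_lt_d9.le
      _ ≤ 20.1 := by norm_num
  rw [← Real.log_exp (5 / 2), ← Real.log_mul (by linarith) (by positivity),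
    show 2 * Real.log (s - 1) = Real.log ((s - 1) ^ 2) by rw [Real.log_pow]; norm_num]
  refine Real.log_le_log (by positivity) ?_
  nlinarith

theorem log_ge_of_ge {x : ℝ} (hx : 9.8e18 ≤ x) : 43 ≤ Real.log x := by
  have h2 := Real.log_two_gt_d9
  have h : Real.log (2 ^ 63) ≤ Real.log x :=
    Real.log_le_log (by positivity) (le_trans (by norm_num) hx)
  rw [Real.log_pow] at h
  norm_num at h
  linarith

end ClassNumberBound

open Real

/-- **Lemma (class number of the auxiliary real quadratic field).** Let `d < 0` be an
integer with `|d| ≥ 9.8·10^18`, and let `q₁, q₂` be distinct odd primes with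
`k = q₁·q₂ ≡ 1 (mod 4)` and `k ≤ 1.62·(log |d|)²`. Then the class number of the real
quadratic field `ℚ(√k)` (of discriminant `k`) is at most `0.64·log |d|`. -/
theorem auxiliary_class_number_bound
    (d : ℤ) (hd : d < 0) (hsize : (|d| : ℝ) ≥ 9.8e18)
    (q₁ q₂ : ℕ) (hq₁ : q₁.Prime) (hq₂ : q₂.Prime)
    (hodd₁ : Odd q₁) (hodd₂ : Odd q₂) (hne : q₁ ≠ q₂)
    (k : ℕ) (hk : k = q₁ * q₂) (hk4 : k % 4 = 1)
    (hksize : (k : ℝ) ≤ 1.62 * (Real.log |(d : ℝ)|) ^ 2)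
    (K : Type*) [Field K] [NumberField K]
    (hdeg : Module.finrank ℚ K = 2)
    (hdisc : NumberField.discr K = (k : ℤ)) :
    (NumberField.classNumber K : ℝ) ≤ 0.64 * Real.log |(d : ℝ)| := by
  have : Fact q₁.Prime := ⟨hq₁⟩
  have : Fact q₂.Prime := ⟨hq₂⟩
  subst hk
  have hp2 : q₁ ≠ 2 := by rintro rfl; exact absurd hodd₁ (by decide)
  have hq2 : q₂ ≠ 2 := by rintro rfl; exact absurd hodd₂ (by decide)
  have hk17 : 17 ≤ q₁ * q₂ := by
    have h₁ := hq₁.two_le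
    have h₂ := hq₂.two_le
    have : 15 ≤ q₁ * q₂ := by
      obtain ⟨a, ha⟩ := hodd₁
      obtain ⟨b, hb⟩ := hodd₂
      rcases lt_or_gt_of_ne hne with h | h
      · nlinarith [Nat.mul_le_mul (by omega : 3 ≤ q₁) (by omega : 5 ≤ q₂)]
      · nlinarith [Nat.mul_le_mul (by omega : 5 ≤ q₁) (by omega : 3 ≤ q₂)]
    omega
  have hpos : 0 < NumberField.discr K := by rw [hdisc]; omega
  obtain ⟨t, ht, h8, hR⟩ := exists_log_le_regulator hdeg (by rw [hdisc]; omega)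
    (by rw [hdisc]; exact_mod_cast hodd₁.mul hodd₂)
  have hclass := classNumber_mul_regulator_le hdeg hpos
  have hL := dedekindZeta_residue_le_log hp2 hq2 hne hk4 hdeg hdisc
  have hR0 := NumberField.Units.regulator_pos K
  rw [hdisc, Int.cast_natCast] at hR hclass
  rw [hdisc] at h8
  set s := √(q₁ * q₂ : ℕ) with hs
  set R := NumberField.Units.regulator K
  set h : ℝ := (NumberField.classNumber K : ℝ)
  set L := NumberField.dedekindZeta_residue K
  have hlog : 43 ≤ Real.log |(d : ℝ)| := log_ge_of_ge (by exact_mod_cast hsize)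
  have hs4 : 4.1 ≤ s := by
    refine Real.le_sqrt_of_sq_le (le_trans (by norm_num) (Nat.cast_le.mpr hk17))
  have hs_le : s / 2 ≤ 0.64 * Real.log |(d : ℝ)| := by
    rw [div_le_iff₀ two_pos]
    refine Real.sqrt_le_iff.mpr ⟨by positivity, hksize.trans ?_⟩
    nlinarith
  have ht1 : (1 : ℝ) ≤ |t| := by exact_mod_cast Int.one_le_abs ht
  have hRs : Real.log (s - 1) ≤ R := by
    refine (Real.log_le_log (by linarith) ?_).trans hR
    nlinarith
  rcases le_or_gt s 27 with hs27 | hs27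
  · have hL2 : L ≤ 2 * R := by
      refine hL.trans
        ((log_half_add_one_le (r := (s - 1) ^ 2) (by linarith) (by nlinarith)).trans ?_)
      rw [Real.log_pow]
      push_cast
      linarith
    have : h ≤ s := by
      refine le_of_mul_le_mul_left ?_ (by positivity : 0 < 2 * R)
      nlinarith
    linarith
  · have hLR : L ≤ R := by
      have hmod : q₁ * q₂ % 8 = 1 ∨ q₁ * q₂ % 8 = 5 := by omega
      rcases hmod with hmod | hmod
      · have ht2 : (2 : ℝ) ≤ |t| := by
          have heven := h8 (by exact_mod_cast hmod)
          exact_mod_cast Int.le_of_dvd (abs_pos.mpr ht) ((dvd_abs _ _).mpr heven.two_dvd)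
        exact hL.trans ((log_half_add_one_le (by linarith) (by nlinarith)).trans hR)
      · exact (dedekindZeta_residue_le_half_log hp2 hq2 hne hmod hdeg hdisc).trans
          ((half_log_add_le hs27.le).trans hRs)
    have : h ≤ s / 2 := by
      refine le_of_mul_le_mul_left ?_ (by positivity : 0 < 2 * R)
      nlinarith
    linarith
end

section
/- Let d < 0 be an integer with |d| ≥ 9.8·10^18, and let q₁, q₂ be distinct odd primes with k = q₁·q₂ ≡ 1 (mod 4) and k ≤ 1.62·(log|d|)². Then the regulator log ε of the real quadratic field ℚ(√k), where ε is its fundamental unit, satisfies log ε ≤ 1.69·log|d|·log log|d|. -/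
open Real

/-- The integral comparison `∑_{n ≤ z} log (z / n) ≤ z - 1`. -/
theorem Real.sum_log_div_le {z : ℝ} (hz : 1 ≤ z) :
    ∑ n ∈ Finset.Ioc 0 ⌊z⌋₊, Real.log (z / n) ≤ z - 1 := by
  have hfac (N : ℕ) (hN : 1 ≤ N) : ∀ x : ℝ, (N : ℝ) ≤ x →
      ∑ n ∈ Finset.Ioc 0 N, Real.log (x / n) ≤ x - 1 := by
    induction N, hN using Nat.le_induction with
    | base =>
      intro x hx
      simpa using Real.log_le_sub_one_of_pos (by push_cast at hx; linarith)
    | succ N hN ih =>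
      intro x hx
      have hN' : (1 : ℝ) ≤ N := by exact_mod_cast hN
      push_cast at hx
      have hstep : ∑ n ∈ Finset.Ioc 0 (N + 1), Real.log (x / n)
          = ∑ n ∈ Finset.Ioc 0 (N + 1), Real.log (((N : ℝ) + 1) / n)
            + (N + 1) * Real.log (x / (N + 1)) := by
        have : ∀ n ∈ Finset.Ioc 0 (N + 1), Real.log (x / n)
            = Real.log (((N : ℝ) + 1) / n) + Real.log (x / (N + 1)) := by
          intro n hn
          have hn0 : (0 : ℝ) < n := by exact_mod_cast (Finset.mem_Ioc.mp hn).1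
          rw [← Real.log_mul (by positivity) (by apply ne_of_gt; apply div_pos <;> linarith)]
          congr 1
          field_simp
        rw [Finset.sum_congr rfl this, Finset.sum_add_distrib]
        simp
      have hlast : ∑ n ∈ Finset.Ioc 0 (N + 1), Real.log (((N : ℝ) + 1) / n)
          = ∑ n ∈ Finset.Ioc 0 N, Real.log (((N : ℝ) + 1) / n) := by
        rw [Finset.sum_Ioc_succ_top (by omega)]
        push_cast
        rw [div_self (by positivity), Real.log_one, add_zero]
      have h1 := ih ((N : ℝ) + 1) (by linarith)
      have h2 := Real.log_le_sub_one_of_pos (x := x / (N + 1)) (by apply div_pos <;> linarith)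
      have h3 : ((N : ℝ) + 1) * Real.log (x / (N + 1)) ≤ x - (N + 1) := by
        calc ((N : ℝ) + 1) * Real.log (x / (N + 1)) ≤ (N + 1) * (x / (N + 1) - 1) := by gcongr
          _ = x - (N + 1) := by field_simp
      rw [hstep, hlast]
      linarith
  exact hfac _ (Nat.le_floor (by exact_mod_cast hz)) z (Nat.floor_le (by linarith))

/-- The divisor-sum bound `∑_{mn ≤ y} log (y / (mn)) ≤ y log y + 1`. -/
theorem Real.sum_sum_log_div_le {y : ℝ} (hy : 1 ≤ y) :
    ∑ m ∈ Finset.Ioc 0 ⌊y⌋₊, ∑ n ∈ Finset.Ioc 0 ⌊y / m⌋₊, Real.log (y / m / n)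
      ≤ y * Real.log y + 1 := by
  have hy0 : 0 < y := by linarith
  have hinner : ∀ m ∈ Finset.Ioc 0 ⌊y⌋₊,
      ∑ n ∈ Finset.Ioc 0 ⌊y / m⌋₊, Real.log (y / m / n) ≤ y * (m : ℝ)⁻¹ - 1 := by
    intro m hm
    obtain ⟨hm0, hmy⟩ := Finset.mem_Ioc.mp hm
    have hm0' : (0 : ℝ) < m := by exact_mod_cast hm0
    rw [← div_eq_mul_inv]
    exact Real.sum_log_div_le ((one_le_div hm0').mpr ((Nat.le_floor_iff hy0.le).mp hmy))
  have hharm : ∑ m ∈ Finset.Ioc 0 ⌊y⌋₊, (m : ℝ)⁻¹ ≤ 1 + Real.log y := by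
    have h := harmonic_le_one_add_log ⌊y⌋₊
    rw [harmonic_eq_sum_Icc] at h
    push_cast at h
    have hfloor : (1 : ℝ) ≤ ⌊y⌋₊ := by exact_mod_cast Nat.le_floor (by exact_mod_cast hy)
    have hlog : Real.log ⌊y⌋₊ ≤ Real.log y := Real.log_le_log (by linarith) (Nat.floor_le hy0.le)
    exact h.trans (by linarith)
  refine (Finset.sum_le_sum hinner).trans ?_
  rw [Finset.sum_sub_distrib, ← Finset.mul_sum]
  have h1 := mul_le_mul_of_nonneg_left hharm hy0.le
  have h2 := Nat.lt_floor_add_one y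
  simp only [Finset.sum_const, Nat.card_Ioc, nsmul_eq_mul, mul_one, tsub_zero]
  linarith

theorem Int.dvd_sub_of_gcd_eq {k a b u v : ℤ} (hk : Squarefree k) (ha : 0 < a)
    (hb : a ∣ k - b ^ 2) (hu : a ∣ u * (u + b)) (hv : a ∣ v * (v + b))
    (h : Int.gcd u a = Int.gcd v a) : a ∣ u - v := by
  obtain ⟨c, hc⟩ := Int.gcd_dvd_right u a
  have hcofactor (w : ℤ) (hw : a ∣ w * (w + b)) (hg : Int.gcd u a = Int.gcd w a) : c ∣ w + b := by
    have hgpos : 0 < Int.gcd w a := Int.gcd_pos_of_ne_zero_right _ ha.ne'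
    have hg0 : (Int.gcd w a : ℤ) ≠ 0 := by exact_mod_cast hgpos.ne'
    obtain ⟨w', hw'⟩ := Int.gcd_dvd_left w a
    rw [hg] at hc
    have hcop : IsCoprime c w' := by
      have := Int.isCoprime_iff_gcd_eq_one.mpr (Int.gcd_div_gcd_div_gcd hgpos)
      rw [Int.ediv_eq_of_eq_mul_right hg0 hw', Int.ediv_eq_of_eq_mul_right hg0 hc] at this
      exact this.symm
    refine hcop.dvd_of_dvd_mul_left (Int.dvd_of_mul_dvd_mul_left hg0 ?_)
    rw [← hc, ← mul_assoc, ← hw']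
    exact hw
  have hcu := hcofactor u hu rfl
  have hcv := hcofactor v hv h
  have hgu := Int.gcd_dvd_left u a
  have hgv := Int.gcd_dvd_left v a
  rw [← h] at hgv
  have hcop : IsCoprime (Int.gcd u a : ℤ) c := by
    refine isCoprime_of_prime_dvd ?_ ?_
    · rintro ⟨h0, -⟩
      rw [h0, zero_mul] at hc
      exact ha.ne' hc
    · intro p hp hpg hpc
      have hpb : p ∣ b := by
        have := dvd_sub (hpc.trans hcu) (hpg.trans hgu)
        rwa [add_sub_cancel_left] at this
      refine hp.not_isUnit (hk p ?_)
      have h1 : p * p ∣ k - b ^ 2 := (hc ▸ mul_dvd_mul hpg hpc : p * p ∣ a).trans hb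
      have h2 : p * p ∣ b ^ 2 := by rw [sq]; exact mul_dvd_mul hpb hpb
      simpa using dvd_add h1 h2
  have hcuv : c ∣ u - v := by simpa using dvd_sub hcu hcv
  have := hcop.mul_dvd (dvd_sub hgu hgv) hcuv
  rwa [← hc] at this

/-- The pair `(a, b)` encodes a reduced quadratic irrational `(b + √k) / (2a)` of
discriminant `k`. -/
structure IsReducedPair (k : ℕ) (x : ℤ × ℤ) : Prop where
  fst_pos : 0 < x.1
  snd_lt : (x.2 : ℝ) < √k
  sub_lt : √k - x.2 < 2 * x.1
  lt_add : 2 * (x.1 : ℝ) < √k + x.2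
  dvd : 4 * x.1 ∣ (k : ℤ) - x.2 ^ 2

/-- The quadratic irrational `(b + √k) / (2a)` attached to the pair `(a, b)`. -/
noncomputable def pairQuotient (k : ℕ) (x : ℤ × ℤ) : ℝ := (x.2 + √k) / (2 * x.1)

namespace IsReducedPair

variable {k : ℕ} {x : ℤ × ℤ}

theorem fst_lt (hx : IsReducedPair k x) : (x.1 : ℝ) < √k := by
  linarith [hx.snd_lt, hx.lt_add]

theorem one_lt_pairQuotient (hx : IsReducedPair k x) : 1 < pairQuotient k x := by
  have h0 : (0 : ℝ) < x.1 := by exact_mod_cast hx.fst_pos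
  rw [pairQuotient, one_lt_div (by positivity)]
  linarith [hx.lt_add]

theorem pairQuotient_le (hx : IsReducedPair k x) : pairQuotient k x ≤ √k / x.1 := by
  have h0 : (0 : ℝ) < x.1 := by exact_mod_cast hx.fst_pos
  rw [pairQuotient, div_le_div_iff₀ (by positivity) h0]
  nlinarith [hx.snd_lt]

/-- One step of the continued fraction expansion. -/
theorem exists_next (hx : IsReducedPair k x) (hirr : Irrational √k) :
    ∃ y, IsReducedPair k y ∧ ∃ n : ℤ,
      pairQuotient k x * pairQuotient k y = n * pairQuotient k y + 1 := by
  obtain ⟨a, b⟩ := x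
  have ha : 0 < a := hx.fst_pos
  have ha' : (0 : ℝ) < a := by exact_mod_cast ha
  have hsq : √(k : ℝ) ^ 2 = k := Real.sq_sqrt (Nat.cast_nonneg k)
  have hquot := hx.one_lt_pairQuotient
  have hbs : (b : ℝ) < √k := hx.snd_lt
  obtain ⟨m, hm⟩ : 4 * a ∣ (k : ℤ) - b ^ 2 := hx.dvd
  set n := ⌊pairQuotient k (a, b)⌋ with hn
  have hn1 : (1 : ℝ) ≤ n := by exact_mod_cast Int.le_floor.mpr (by exact_mod_cast hquot.le)
  have hmul : pairQuotient k (a, b) * (2 * a) = b + √k := by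
    simp only [pairQuotient]
    field_simp
  have hfl := Int.floor_le (pairQuotient k (a, b))
  have hlt := Int.lt_floor_add_one (pairQuotient k (a, b))
  rw [← hn] at hfl hlt
  obtain ⟨b', hb'⟩ : ∃ b' : ℤ, b' = 2 * a * n - b := ⟨_, rfl⟩
  obtain ⟨a', ha'eq⟩ : ∃ a' : ℤ, a' = m + b * n - a * n ^ 2 := ⟨_, rfl⟩
  have hprod : (k : ℤ) - b' ^ 2 = 4 * a * a' := by
    rw [hb', ha'eq]
    linear_combination hm
  have hb'R : (b' : ℝ) = 2 * a * n - b := by exact_mod_cast hb'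
  have hprodR : (√k - b') * (√k + b') = 4 * a * a' := by
    have : (k : ℝ) - b' ^ 2 = 4 * a * a' := by exact_mod_cast hprod
    linear_combination hsq + this
  have hle : (b' : ℝ) ≤ √k := by nlinarith
  have hlt' : (b' : ℝ) < √k := lt_of_le_of_ne hle fun h ↦ hirr ⟨b', by exact_mod_cast h⟩
  have hgap : √k - b' < 2 * a := by nlinarith
  have hadd : 2 * (a : ℝ) < √k + b' := by nlinarith
  have hapos : (0 : ℝ) < a' := by
    have : 0 < 4 * (a : ℝ) * a' := hprodR ▸ mul_pos (by linarith) (by linarith)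
    exact pos_of_mul_pos_right this (by positivity)
  refine ⟨(a', b'), ⟨by exact_mod_cast hapos, hlt', ?_, ?_, ⟨a, by simp only; rw [hprod]; ring⟩⟩,
    n, ?_⟩
  · simp only
    nlinarith
  · simp only
    nlinarith
  · have hmul' : pairQuotient k (a', b') * (2 * a') = b' + √k := by
      simp only [pairQuotient]
      field_simp
    have hfrac : (pairQuotient k (a, b) - n) * (2 * a) = √k - b' := by
      rw [sub_mul, hmul, hb'R]
      ring
    have key : (pairQuotient k (a, b) - n) * pairQuotient k (a', b') * (4 * a * a')
        = 1 * (4 * a * a') := by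
      linear_combination hprodR + (√k + b') * hfrac
        + (pairQuotient k (a, b) - n) * (2 * a) * hmul'
    have := mul_right_cancel₀ (by positivity) key
    linear_combination this

theorem exists_start (hk : 4 < k) (hk4 : k % 4 = 1) (hirr : Irrational √k) :
    ∃ x, IsReducedPair k x := by
  have hs : 2 < √(k : ℝ) := by
    rw [Real.lt_sqrt (by norm_num)]
    norm_num
    exact_mod_cast hk
  set n := ⌊(√(k : ℝ) - 1) / 2⌋ with hn
  have hfl := Int.floor_le ((√(k : ℝ) - 1) / 2)
  have hlt := Int.lt_floor_add_one ((√(k : ℝ) - 1) / 2)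
  rw [← hn] at hfl hlt
  have hn0 : (0 : ℝ) ≤ n := by exact_mod_cast Int.floor_nonneg.mpr (by linarith)
  have hb : ((2 * n + 1 : ℤ) : ℝ) = 2 * n + 1 := by push_cast; ring
  refine ⟨(1, 2 * n + 1), one_pos, ?_, ?_, ?_, ?_⟩
  · refine lt_of_le_of_ne ?_ fun h ↦ hirr ⟨(2 * n + 1 : ℤ), by exact_mod_cast h⟩
    simp only [hb]
    linarith
  · simp only [hb]
    push_cast
    linarith
  · simp only [hb]
    push_cast
    linarith
  · refine ⟨(k / 4 : ℕ) - n * (n + 1), ?_⟩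
    have : (k : ℤ) = 4 * (k / 4 : ℕ) + 1 := by omega
    simp only
    linear_combination this

theorem finite_setOf (k : ℕ) : {x | IsReducedPair k x}.Finite := by
  refine ((Set.finite_Icc (0 : ℤ) ⌈√(k : ℝ)⌉).prod
    (Set.finite_Icc (-⌈√(k : ℝ)⌉) ⌈√(k : ℝ)⌉)).subset ?_
  rintro x hx
  have hc := Int.le_ceil √(k : ℝ)
  have h0 : (0 : ℝ) < x.1 := by exact_mod_cast hx.fst_pos
  have h1 := hx.fst_lt
  have h2 := hx.snd_lt
  have h3 := hx.lt_add
  refine ⟨⟨hx.fst_pos.le, ?_⟩, ?_, ?_⟩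
  · exact_mod_cast h1.le.trans hc
  · have : ((-⌈√(k : ℝ)⌉ : ℤ) : ℝ) ≤ x.2 := by push_cast; linarith
    exact_mod_cast this
  · exact_mod_cast h2.le.trans hc

theorem odd_snd (hx : IsReducedPair k x) (hk : Odd k) : Odd x.2 := by
  obtain ⟨c, hc⟩ := hx.dvd
  by_contra h
  rw [Int.not_odd_iff_even] at h
  obtain ⟨t, ht⟩ := h
  obtain ⟨r, hr⟩ := hk
  rw [ht, hr] at hc
  push_cast at hc
  have : 2 * ((r : ℤ) - 2 * t ^ 2 - 2 * (x.1 * c)) = -1 := by linear_combination hc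
  omega

/-- The reduced pairs embed into pairs of natural numbers in such a way that the first component
becomes the product. -/
theorem exists_injOn_mul_eq (hk : Squarefree k) (hodd : Odd k) :
    ∃ F : ℤ × ℤ → ℕ × ℕ, Set.InjOn F {x | IsReducedPair k x} ∧
      ∀ x, IsReducedPair k x → (((F x).1 * (F x).2 : ℕ) : ℤ) = x.1 := by
  classical
  have hroot : ∀ a : ℤ, ∃ b : ℤ, (∃ c, IsReducedPair k (a, c)) → IsReducedPair k (a, b) := by
    intro a
    by_cases h : ∃ c, IsReducedPair k (a, c)
    · obtain ⟨c, hc⟩ := h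
      exact ⟨c, fun _ ↦ hc⟩
    · exact ⟨0, fun h' ↦ absurd h' h⟩
  choose β hβ using hroot
  let g : ℤ × ℤ → ℕ := fun x ↦ Int.gcd ((x.2 - β x.1) / 2) x.1
  have hmul : ∀ x, IsReducedPair k x → ((g x * (x.1.toNat / g x) : ℕ) : ℤ) = x.1 := by
    intro x hx
    have hdvd : g x ∣ x.1.toNat := by
      rw [← Int.natCast_dvd_natCast, Int.toNat_of_nonneg hx.fst_pos.le]
      exact Int.gcd_dvd_right _ _
    rw [Nat.mul_div_cancel' hdvd, Int.toNat_of_nonneg hx.fst_pos.le]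
  refine ⟨fun x ↦ (g x, x.1.toNat / g x), ?_, hmul⟩
  rintro ⟨a, b⟩ hx ⟨a', b'⟩ hy hxy
  have h1 : g (a, b) = g (a', b') := congrArg Prod.fst hxy
  have haa : a = a' := by
    have hx' := hmul _ hx
    have hy' := hmul _ hy
    have h2 : (a, b).1.toNat / g (a, b) = (a', b').1.toNat / g (a', b') := congrArg Prod.snd hxy
    rw [h2, h1] at hx'
    exact hx'.symm.trans hy'
  subst haa
  have ha : 0 < a := hx.fst_pos
  have hβ' := hβ a ⟨b, hx⟩
  obtain ⟨r, hr⟩ := hx.odd_snd hodd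
  obtain ⟨r', hr'⟩ := hy.odd_snd hodd
  obtain ⟨t, ht⟩ := hβ'.odd_snd hodd
  simp only at hr hr' ht
  have hdvd (c w : ℤ) (hc : IsReducedPair k (a, c)) (hw : c = β a + 2 * w) :
      a ∣ w * (w + β a) := by
    have h := dvd_sub hβ'.dvd hc.dvd
    simp only at h
    have h4 : (k : ℤ) - β a ^ 2 - (k - c ^ 2) = 4 * (w * (w + β a)) := by rw [hw]; ring
    rw [h4] at h
    exact Int.dvd_of_mul_dvd_mul_left (by norm_num) h
  have hu := hdvd b (r - t) hx (by omega)
  have hv := hdvd b' (r' - t) hy (by omega)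
  have hgcd : Int.gcd (r - t) a = Int.gcd (r' - t) a := by
    have e1 : (b - β a) / 2 = r - t := by omega
    have e2 : (b' - β a) / 2 = r' - t := by omega
    simpa only [g, e1, e2] using h1
  obtain ⟨c, hc⟩ := Int.dvd_sub_of_gcd_eq (Int.squarefree_natCast.mpr hk) ha
    ((Dvd.intro_left 4 rfl).trans hβ'.dvd) hu hv hgcd
  have hbb : b - b' = 2 * a * c := by linear_combination hr - hr' + 2 * hc
  have hbbR : (b : ℝ) - b' = 2 * a * c := by exact_mod_cast hbb
  have haR : (0 : ℝ) < a := by exact_mod_cast ha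
  have hxs := hx.snd_lt
  have hxl := hx.sub_lt
  have hys := hy.snd_lt
  have hyl := hy.sub_lt
  simp only at hxs hxl hys hyl
  have hc1 : (c : ℝ) < 1 := by nlinarith
  have hc2 : (-1 : ℝ) < c := by nlinarith
  have hc0 : c = 0 := by
    have h1 : c < 1 := by exact_mod_cast hc1
    have h2 : -1 < c := by exact_mod_cast hc2
    omega
  rw [hc0, mul_zero, sub_eq_zero] at hbb
  rw [hbb]

end IsReducedPair

theorem Function.exists_iterate_eq_injOn {α : Type*} [Finite α] [Nonempty α] (f : α → α) :
    ∃ y, ∃ p > 0, f^[p] y = y ∧ Set.InjOn (fun i ↦ f^[i] y) (Set.Iio p) := by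
  obtain ⟨x⟩ := ‹Nonempty α›
  obtain ⟨i, j, hij, h⟩ := Finite.exists_ne_map_eq_of_infinite fun i : ℕ ↦ f^[i] x
  wlog hlt : i < j generalizing i j
  · exact this j i hij.symm h.symm (by omega)
  have hper : f^[i] x ∈ Function.periodicPts f := by
    refine ⟨j - i, by omega, ?_⟩
    rw [Function.IsPeriodicPt, Function.IsFixedPt, ← Function.iterate_add_apply,
      Nat.sub_add_cancel hlt.le]
    exact h.symm
  exact ⟨f^[i] x, _, Function.minimalPeriod_pos_of_mem_periodicPts hper,
    Function.iterate_minimalPeriod, Function.iterate_injOn_Iio_minimalPeriod⟩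

/-- The convergent matrix of a continued fraction with complete quotients `ξ i` is an integer
matrix of determinant `±1`. -/
theorem exists_convergent_matrix (ξ : ℕ → ℝ)
    (hξ : ∀ i, ∃ n : ℤ, ξ i * ξ (i + 1) = n * ξ (i + 1) + 1) (j : ℕ) :
    ∃ p q r t : ℤ, (p * t - q * r) ^ 2 = 1 ∧
      p * ξ j + q = (∏ i ∈ Finset.range j, ξ (i + 1)) * ξ 0 ∧
      r * ξ j + t = ∏ i ∈ Finset.range j, ξ (i + 1) := by
  induction j with
  | zero => exact ⟨1, 0, 0, 1, by norm_num, by simp, by simp⟩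
  | succ j ih =>
    obtain ⟨p, q, r, t, hdet, h1, h2⟩ := ih
    obtain ⟨n, hn⟩ := hξ j
    refine ⟨p * n + q, p, r * n + t, r, by linear_combination hdet, ?_, ?_⟩
    · rw [Finset.prod_range_succ]
      push_cast
      linear_combination ξ (j + 1) * h1 - p * hn
    · rw [Finset.prod_range_succ, ← h2]
      push_cast
      linear_combination -r * hn

theorem IsReducedPair.sum_log_pairQuotient_le {k : ℕ} (hk : Squarefree k) (hodd : Odd k)
    (S : Finset (ℤ × ℤ)) (hS : ∀ x ∈ S, IsReducedPair k x) :
    ∑ x ∈ S, Real.log (pairQuotient k x) ≤ √k * Real.log √k + 1 := by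
  classical
  have hs : 1 ≤ √(k : ℝ) := by
    rw [Real.one_le_sqrt]
    exact_mod_cast hodd.pos
  obtain ⟨F, hinj, hF⟩ := IsReducedPair.exists_injOn_mul_eq hk hodd
  let T : Finset ((_ : ℕ) × ℕ) :=
    (Finset.Ioc 0 ⌊√(k : ℝ)⌋₊).sigma fun m ↦ Finset.Ioc 0 ⌊√(k : ℝ) / m⌋₊
  let G : ℤ × ℤ → (_ : ℕ) × ℕ := fun x ↦ ⟨(F x).1, (F x).2⟩
  have hG : Set.InjOn G S := by
    intro x hx y hy hxy
    refine hinj (hS x hx) (hS y hy) (Prod.ext (congrArg Sigma.fst hxy) ?_)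
    simpa [G] using congrArg (fun z : (_ : ℕ) × ℕ ↦ z.2) hxy
  have hprod : ∀ x ∈ S, ((F x).1 : ℝ) * (F x).2 = x.1 := by
    intro x hx
    exact_mod_cast hF x (hS x hx)
  have hpos : ∀ x ∈ S, 0 < (F x).1 ∧ 0 < (F x).2 := by
    intro x hx
    have h := hF x (hS x hx)
    have h0 := (hS x hx).fst_pos
    rw [← h] at h0
    exact ⟨Nat.pos_of_mul_pos_right (by exact_mod_cast h0),
      Nat.pos_of_mul_pos_left (by exact_mod_cast h0)⟩
  have hsub : S.image G ⊆ T := by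
    intro z hz
    obtain ⟨x, hx, rfl⟩ := Finset.mem_image.mp hz
    obtain ⟨h1, h2⟩ := hpos x hx
    have h1' : (1 : ℝ) ≤ (F x).1 := by exact_mod_cast h1
    have h2' : (1 : ℝ) ≤ (F x).2 := by exact_mod_cast h2
    have hlt := (hS x hx).fst_lt
    rw [← hprod x hx] at hlt
    simp only [T, G, Finset.mem_sigma, Finset.mem_Ioc]
    refine ⟨⟨h1, Nat.le_floor (by nlinarith)⟩, h2, Nat.le_floor ?_⟩
    rw [le_div_iff₀ (by linarith)]
    linarith
  calc ∑ x ∈ S, Real.log (pairQuotient k x)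
      ≤ ∑ x ∈ S, Real.log (√k / (G x).1 / (G x).2) := by
        refine Finset.sum_le_sum fun x hx ↦ ?_
        have hx' := hS x hx
        rw [div_div, hprod x hx]
        exact Real.log_le_log (by linarith [hx'.one_lt_pairQuotient]) hx'.pairQuotient_le
    _ = ∑ z ∈ S.image G, Real.log (√k / z.1 / z.2) :=
        (Finset.sum_image (f := fun z : (_ : ℕ) × ℕ ↦ Real.log (√k / z.1 / z.2)) hG).symm
    _ ≤ ∑ z ∈ T, Real.log (√k / z.1 / z.2) := by
        refine Finset.sum_le_sum_of_subset_of_nonneg hsub fun z hz _ ↦ Real.log_nonneg ?_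
        simp only [T, Finset.mem_sigma, Finset.mem_Ioc] at hz
        have h2 : (0 : ℝ) < z.2 := by exact_mod_cast hz.2.1
        rw [one_le_div h2]
        exact (Nat.le_floor_iff (by positivity)).mp hz.2.2
    _ ≤ √k * Real.log √k + 1 := by
        rw [Finset.sum_sigma]
        exact Real.sum_sum_log_div_le hs

/-- A nontrivial unit of `ℚ(√k)` of small logarithm, written as `r ξ + t` for a quadratic
irrational `ξ`, together with the quadratic equation it satisfies. -/
theorem exists_quadratic_unit {k : ℕ} (hk : Squarefree k) (hk4 : k % 4 = 1) (hk1 : 4 < k) :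
    ∃ a b r t c e : ℤ, e ^ 2 = 1 ∧ ∃ η : ℝ, η = r * ((b + √k) / (2 * a)) + t ∧ 1 < η ∧
      η ^ 2 - c * η + e = 0 ∧ Real.log η ≤ √k * Real.log √k + 1 := by
  classical
  have hodd : Odd k := by rw [Nat.odd_iff]; omega
  have hirr : Irrational √(k : ℝ) := by
    rw [irrational_sqrt_natCast_iff]
    rintro ⟨m, hm⟩
    have := Nat.isUnit_iff.mp (hk m (hm ▸ dvd_rfl))
    rw [hm, this] at hk1
    omega
  let α := {x // IsReducedPair k x}
  have : Finite α := (IsReducedPair.finite_setOf k).to_subtype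
  have : Nonempty α := nonempty_subtype.mpr (IsReducedPair.exists_start hk1 hk4 hirr)
  have hstep : ∀ x : α, ∃ y : α, ∃ n : ℤ,
      pairQuotient k x * pairQuotient k y = n * pairQuotient k y + 1 := fun x ↦ by
    obtain ⟨y, hy, h⟩ := x.2.exists_next hirr
    exact ⟨⟨y, hy⟩, h⟩
  choose f hf using hstep
  obtain ⟨y, p, hp, hper, hinj⟩ := Function.exists_iterate_eq_injOn f
  let ξ : ℕ → ℝ := fun i ↦ pairQuotient k (f^[i] y).1
  have hξ : ∀ i, 1 < ξ i := fun i ↦ (f^[i] y).2.one_lt_pairQuotient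
  obtain ⟨p', q, r, t, hdet, h1, h2⟩ := exists_convergent_matrix ξ
    (fun i ↦ by simpa only [ξ, Function.iterate_succ_apply'] using hf (f^[i] y)) p
  have hξp : ξ p = ξ 0 := by simp only [ξ, hper, Function.iterate_zero_apply]
  rw [hξp] at h1 h2
  set η := ∏ i ∈ Finset.range p, ξ (i + 1) with hη
  have hη1 : 1 < η := by
    rw [hη, ← Finset.prod_const_one (s := Finset.range p)]
    exact Finset.prod_lt_prod_of_nonempty (fun _ _ ↦ one_pos) (fun i _ ↦ hξ (i + 1))
      (Finset.nonempty_range_iff.mpr hp.ne')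
  refine ⟨(y.1).1, (y.1).2, r, t, p' + t, p' * t - q * r, hdet, η, h2.symm, hη1, ?_, ?_⟩
  · push_cast
    linear_combination -(η - p') * h2 - r * h1
  · have hlog : Real.log η = ∑ i ∈ Finset.range p, Real.log (ξ i) := by
      rw [hη, Real.log_prod fun i _ ↦ (by linarith [hξ (i + 1)])]
      have e1 := Finset.sum_range_succ (fun i ↦ Real.log (ξ i)) p
      have e2 := Finset.sum_range_succ' (fun i ↦ Real.log (ξ i)) p
      rw [hξp] at e1
      linarith
    have hinj' : Set.InjOn (fun i ↦ (f^[i] y).1) (Finset.range p) := by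
      intro i hi j hj hij
      exact hinj (by simpa using hi) (by simpa using hj) (Subtype.ext hij)
    rw [hlog, ← Finset.sum_image (f := fun x ↦ Real.log (pairQuotient k x)) hinj']
    refine IsReducedPair.sum_log_pairQuotient_le hk hodd _ fun x hx ↦ ?_
    obtain ⟨i, -, rfl⟩ := Finset.mem_image.mp hx
    exact (f^[i] y).2

section NumberField

open NumberField NumberField.InfinitePlace

/-- If the unit rank is one, any unit of infinite order bounds the regulator. -/
theorem NumberField.Units.regulator_le_mult_mul_log {K : Type*} [Field K] [NumberField K]
    (hcard : Fintype.card (InfinitePlace K) = 2) (w : InfinitePlace K) (u : (𝓞 K)ˣ)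
    (hu : 1 < w (u : K)) : Units.regulator K ≤ w.mult * Real.log (w (u : K)) := by
  classical
  obtain ⟨w', hw'⟩ := Fintype.exists_ne_of_one_lt_card (by omega) w
  have hrank : Units.rank K = 1 := by rw [Units.rank, hcard]
  have hsub : Fintype.card {v : InfinitePlace K // v ≠ w'} = 1 := by
    simp [Fintype.card_subtype_compl, hcard]
  let e : {v : InfinitePlace K // v ≠ w'} ≃ Fin (Units.rank K) :=
    Fintype.equivFinOfCardEq (hsub.trans hrank.symm)
  have hpos : 0 < w.mult * Real.log (w (u : K)) :=
    mul_pos (by exact_mod_cast w.mult_pos) (Real.log_pos hu)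
  have hreg :
      Units.regOfFamily (fun _ : Fin (Units.rank K) ↦ u) = w.mult * Real.log (w (u : K)) := by
    let _ : Unique {v : InfinitePlace K // v ≠ w'} :=
      { default := ⟨w, hw'.symm⟩
        uniq := fun a ↦ (Fintype.card_le_one_iff.mp hsub.le) _ _ }
    rw [Units.regOfFamily_eq_det _ w' e, Matrix.det_unique]
    exact abs_of_pos hpos
  have hindex := Units.regOfFamily_div_regulator (fun _ : Fin (Units.rank K) ↦ u)
  have hR := Units.regulator_pos K
  have hne : (Subgroup.closure (Set.range fun _ : Fin (Units.rank K) ↦ u) ⊔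
      Units.torsion K).index ≠ 0 := by
    intro h0
    rw [h0, hreg] at hindex
    exact (div_pos hpos hR).ne' (by exact_mod_cast hindex)
  rw [hreg, div_eq_iff hR.ne'] at hindex
  rw [hindex]
  exact le_mul_of_one_le_left hR.le (by exact_mod_cast Nat.one_le_iff_ne_zero.mpr hne)

theorem NumberField.exists_sq_eq_discr {K : Type*} [Field K] [NumberField K]
    (hdeg : Module.finrank ℚ K = 2) : ∃ α : K, α ^ 2 = (discr K : K) := by
  classical
  have : Algebra.IsQuadraticExtension ℚ K := ⟨hdeg⟩
  have hgal : Nat.card Gal(K/ℚ) = 2 := by rw [IsGalois.card_aut_eq_finrank, hdeg]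
  rw [Nat.card_eq_fintype_card, ← Finset.card_univ, Finset.card_eq_two] at hgal
  obtain ⟨σ, τ, hστ, huniv⟩ := hgal
  have htrace (x : K) : algebraMap ℚ K (Algebra.trace ℚ K x) = σ x + τ x := by
    rw [trace_eq_sum_automorphisms, huniv, Finset.sum_pair hστ]
  let b := (integralBasis K).reindex
    (Fintype.equivFinOfCardEq ((Module.finrank_eq_card_basis (integralBasis K)).symm.trans hdeg))
  refine ⟨σ (b 0) * τ (b 1) - σ (b 1) * τ (b 0), ?_⟩
  have hdisc : (discr K : ℚ) = Algebra.discr ℚ b := by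
    rw [coe_discr, Module.Basis.coe_reindex, Algebra.discr_reindex]
  have := congrArg (algebraMap ℚ K) hdisc
  rw [Algebra.discr_def, Matrix.det_fin_two] at this
  simp only [Algebra.traceMatrix_apply, Algebra.traceForm_apply, map_sub, map_mul, htrace,
    map_intCast] at this
  rw [this]
  ring

theorem NumberField.card_infinitePlace_of_discr_pos {K : Type*} [Field K] [NumberField K]
    (hdeg : Module.finrank ℚ K = 2) (hpos : 0 < discr K) :
    nrComplexPlaces K = 0 ∧ Fintype.card (InfinitePlace K) = 2 := by
  have h1 := sign_discr K
  have h2 := card_add_two_mul_card_eq_rank K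
  have h3 := card_eq_nrRealPlaces_add_nrComplexPlaces K
  rw [Int.sign_eq_one_of_pos hpos] at h1
  rw [hdeg] at h2
  have : nrComplexPlaces K ≠ 1 := fun h ↦ by rw [h] at h1; norm_num at h1
  omega

/-- The regulator of a real quadratic field of discriminant `k` is at most `√k log √k + 1`. -/
theorem NumberField.regulator_le_sqrt_mul_log {K : Type*} [Field K] [NumberField K]
    (hdeg : Module.finrank ℚ K = 2) {k : ℕ} (hk : Squarefree k) (hk4 : k % 4 = 1) (hk1 : 4 < k)
    (hdisc : discr K = (k : ℤ)) : Units.regulator K ≤ √k * Real.log √k + 1 := by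
  obtain ⟨hreal, hcard⟩ := card_infinitePlace_of_discr_pos hdeg (by rw [hdisc]; omega)
  have : IsTotallyReal K := nrComplexPlaces_eq_zero_iff.mp hreal
  obtain ⟨w⟩ : Nonempty (InfinitePlace K) := inferInstance
  have hw : w.IsReal := IsTotallyReal.isReal w
  let σ := embedding_of_isReal hw
  obtain ⟨α, hα, hσα⟩ : ∃ α : K, α ^ 2 = (k : K) ∧ σ α = √k := by
    obtain ⟨α, hα⟩ := exists_sq_eq_discr hdeg
    rw [hdisc, Int.cast_natCast] at hα
    have hsq : σ α ^ 2 = √(k : ℝ) ^ 2 := by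
      rw [Real.sq_sqrt (Nat.cast_nonneg k), ← map_pow, hα, map_natCast]
    rcases sq_eq_sq_iff_eq_or_eq_neg.mp hsq with h | h
    · exact ⟨α, hα, h⟩
    · exact ⟨-α, by rw [neg_sq, hα], by rw [map_neg, h, neg_neg]⟩
  obtain ⟨a, b, r, t, c, e, he, η, hη, hη1, hquad, hlog⟩ := exists_quadratic_unit hk hk4 hk1
  let x : K := r * ((b + α) / (2 * a)) + t
  have hσx : σ x = η := by
    simp only [x, map_add, map_mul, map_div₀, map_intCast, map_ofNat, hσα, hη]
  have hx : x ^ 2 - c * x + e = 0 := by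
    refine σ.injective ?_
    rw [map_zero, map_add, map_sub, map_mul, map_pow, hσx, map_intCast, map_intCast, hquad]
  have hint : IsIntegral ℤ x := by
    refine ⟨Polynomial.X ^ 2 - Polynomial.C c * Polynomial.X + Polynomial.C e, by monicity!, ?_⟩
    simpa only [Polynomial.eval₂_add, Polynomial.eval₂_sub, Polynomial.eval₂_mul,
      Polynomial.eval₂_pow, Polynomial.eval₂_X, Polynomial.eval₂_C, algebraMap_int_eq,
      Int.coe_castRingHom] using hx
  have hinv : x * (e * (c - x)) = 1 := by
    have : (e : K) ^ 2 = 1 := by exact_mod_cast he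
    linear_combination this - e * hx
  let X : 𝓞 K := ⟨x, hint⟩
  have hXinv : X * (e * (c - X)) = 1 := by
    refine RingOfIntegers.coe_injective ?_
    simp only [map_mul, map_sub, map_intCast, map_one]
    exact hinv
  let u : (𝓞 K)ˣ := Units.mkOfMulEqOne X _ hXinv
  have hu : w (u : K) = η := by
    rw [← norm_embedding_of_isReal hw]
    change ‖σ x‖ = η
    rw [hσx, Real.norm_of_nonneg (by linarith)]
  have hreg := NumberField.Units.regulator_le_mult_mul_log hcard w u (by rwa [hu])
  rw [hu, mult_isReal ⟨w, hw⟩, Nat.cast_one, one_mul] at hreg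
  exact hreg.trans hlog

theorem Real.sqrt_mul_log_sqrt_add_one_le {k L : ℝ} (hL : 10 ≤ L) (hk : 1 ≤ k)
    (hkL : k ≤ 1.62 * L ^ 2) : √k * Real.log √k + 1 ≤ 1.69 * L * Real.log L := by
  have hs : √k ≤ 1.28 * L := by
    rw [Real.sqrt_le_left (by linarith)]
    nlinarith
  have hs1 : 1 ≤ √k := Real.one_le_sqrt.mpr hk
  have hlog : Real.log √k ≤ Real.log L + 0.28 := by
    have h1 := Real.log_le_log (by linarith) hs
    rw [Real.log_mul (by norm_num) (by linarith)] at h1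
    have h2 := Real.log_le_sub_one_of_pos (x := 1.28) (by norm_num)
    linarith
  have hlogL : 2 ≤ Real.log L := by
    rw [Real.le_log_iff_exp_le (by linarith)]
    have h := Real.exp_one_lt_d9
    have : Real.exp 2 = Real.exp 1 ^ 2 := by rw [← Real.exp_nat_mul]; norm_num
    rw [this]
    nlinarith [Real.exp_pos 1]
  have hmul : √k * Real.log √k ≤ 1.28 * L * (Real.log L + 0.28) :=
    mul_le_mul hs hlog (Real.log_nonneg hs1) (by linarith)
  nlinarith

end NumberField

/-- **Lemma (regulator of the auxiliary real quadratic field).** Let `d < 0` be an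
integer with `|d| ≥ 9.8·10^18`, and let `q₁, q₂` be distinct odd primes with
`k = q₁·q₂ ≡ 1 (mod 4)` and `k ≤ 1.62·(log |d|)²`. Then the regulator `log ε` of the
real quadratic field `ℚ(√k)` (of discriminant `k`) is at most
`1.69·log |d|·log log |d|`. -/
theorem auxiliary_regulator_bound
    (d : ℤ) (hd : d < 0) (hsize : (|d| : ℝ) ≥ 9.8e18)
    (q₁ q₂ : ℕ) (hq₁ : q₁.Prime) (hq₂ : q₂.Prime)
    (hodd₁ : Odd q₁) (hodd₂ : Odd q₂) (hne : q₁ ≠ q₂)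
    (k : ℕ) (hk : k = q₁ * q₂) (hk4 : k % 4 = 1)
    (hksize : (k : ℝ) ≤ 1.62 * (Real.log |(d : ℝ)|) ^ 2)
    (K : Type*) [Field K] [NumberField K]
    (hdeg : Module.finrank ℚ K = 2)
    (hdisc : NumberField.discr K = (k : ℤ)) :
    NumberField.Units.regulator K ≤
      1.69 * Real.log |(d : ℝ)| * Real.log (Real.log |(d : ℝ)|) := by
  have hL : 10 ≤ Real.log |(d : ℝ)| := by
    have hd' : (9.8e18 : ℝ) ≤ |(d : ℝ)| := by exact_mod_cast hsize
    rw [Real.le_log_iff_exp_le (by linarith)]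
    have h : Real.exp 10 = Real.exp 1 ^ 10 := by rw [← Real.exp_nat_mul]; norm_num
    have h3 : Real.exp 1 ^ 10 ≤ 3 ^ 10 := by
      gcongr
      linarith [Real.exp_one_lt_d9]
    rw [h]
    linarith
  have hsqf : Squarefree k := by
    rw [hk, Nat.squarefree_mul ((Nat.coprime_primes hq₁ hq₂).mpr hne)]
    exact ⟨hq₁.squarefree, hq₂.squarefree⟩
  have hk4' : 4 < k := by
    have h1 : 3 ≤ q₁ := by have := hq₁.two_le; obtain ⟨m, rfl⟩ := hodd₁; omega
    have h2 : 3 ≤ q₂ := by have := hq₂.two_le; obtain ⟨m, rfl⟩ := hodd₂; omega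
    rw [hk]
    nlinarith
  refine (NumberField.regulator_le_sqrt_mul_log hdeg hsqf hk4 hk4' hdisc).trans ?_
  exact Real.sqrt_mul_log_sqrt_add_one_le hL (by exact_mod_cast (by omega : 1 ≤ k)) hksize
end

section
/- Let d < 0 be a fundamental discriminant with |d| ≥ 9.8·10^18, and let q₁, q₂ be distinct odd primes not dividing d with k = q₁·q₂ ≡ 1 (mod 4) and k ≤ 1.62·(log|d|)². Then the class number of the imaginary quadratic field ℚ(√(kd)) is at most 1.01·√|d|·(log|d|)². -/
open Real

open NumberField UniqueFactorizationMonoid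

open scoped nonZeroDivisors

section QuadraticIdeals

variable {K : Type*} [Field K] [NumberField K]

theorem absNorm_span_natCast_of_finrank_eq_two (hK : Module.finrank ℚ K = 2) (n : ℕ) :
    Ideal.absNorm (Ideal.span {(n : 𝓞 K)}) = n ^ 2 := by
  rw [Ideal.absNorm_span_natCast, RingOfIntegers.rank, hK]

theorem prime_dvd_absNorm_of_natCast_mem (hK : Module.finrank ℚ K = 2) {p : ℕ} (hp : p.Prime)
    {P : Ideal (𝓞 K)} (hP : Prime P) (hpP : (p : 𝓞 K) ∈ P) : p ∣ Ideal.absNorm P := by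
  have hdvd : Ideal.absNorm P ∣ p ^ 2 := by
    rw [← absNorm_span_natCast_of_finrank_eq_two hK]
    exact Ideal.absNorm_dvd_absNorm_of_le ((Ideal.span_singleton_le_iff_mem _).2 hpP)
  obtain ⟨i, -, hi⟩ := (Nat.dvd_prime_pow hp).1 hdvd
  rcases Nat.eq_zero_or_pos i with rfl | hi0
  · rw [pow_zero, Ideal.absNorm_eq_one_iff] at hi
    exact absurd (Ideal.isUnit_iff.2 hi) hP.not_isUnit
  · rw [hi]
    exact dvd_pow_self p hi0.ne'

/-- A prime ideal of norm divisible by `p` contains `p`. -/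
theorem natCast_mem_of_prime_dvd_absNorm {p : ℕ} (hp : p.Prime) {P : Ideal (𝓞 K)} (hP : Prime P)
    (h : p ∣ Ideal.absNorm P) : (p : 𝓞 K) ∈ P := by
  have := Ideal.isPrime_of_prime hP
  have : P.IsMaximal := this.isMaximal hP.ne_zero
  obtain ⟨q, n, -, hqP, hq, hn⟩ := Ideal.exists_prime_and_absNorm_eq_pow P
  rw [hn] at h
  rwa [(Nat.prime_dvd_prime_iff_eq hp hq).1 (hp.dvd_of_dvd_pow h)]

theorem not_prime_dvd_prime_of_ne {P Q : Ideal (𝓞 K)} (hP : Prime P) (hQ : Prime Q)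
    (hne : P ≠ Q) : ¬ P ∣ Q := fun h => hne (associated_iff_eq.1 (hP.associated_of_dvd hQ h))

theorem mul_dvd_of_prime_of_not_dvd {α : Type*} [CommMonoidWithZero α] {P I J : α} (hP : Prime P) (hPI : ¬ P ∣ I)
    (hI : I ∣ J) (hPJ : P ∣ J) : I * P ∣ J := by
  obtain ⟨L, rfl⟩ := hI
  exact mul_dvd_mul_left I ((hP.dvd_or_dvd hPJ).resolve_left hPI)

theorem absNorm_eq_of_natCast_mem_of_ne (hK : Module.finrank ℚ K = 2) {p : ℕ} (hp : p.Prime)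
    {P Q : Ideal (𝓞 K)} (hP : Prime P) (hQ : Prime Q) (hpP : (p : 𝓞 K) ∈ P)
    (hpQ : (p : 𝓞 K) ∈ Q) (hne : P ≠ Q) : Ideal.absNorm P = p := by
  have hdvd : P * Q ∣ Ideal.span {(p : 𝓞 K)} :=
    mul_dvd_of_prime_of_not_dvd hQ (not_prime_dvd_prime_of_ne hQ hP hne.symm)
      (Ideal.dvd_span_singleton.2 hpP) (Ideal.dvd_span_singleton.2 hpQ)
  have hN := map_dvd Ideal.absNorm hdvd
  rw [map_mul, absNorm_span_natCast_of_finrank_eq_two hK] at hN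
  obtain ⟨a, ha⟩ := prime_dvd_absNorm_of_natCast_mem hK hp hP hpP
  obtain ⟨b, hb⟩ := prime_dvd_absNorm_of_natCast_mem hK hp hQ hpQ
  rw [ha, hb, show p * a * (p * b) = p ^ 2 * (a * b) by ring] at hN
  have hab : a * b ∣ 1 :=
    Nat.dvd_of_mul_dvd_mul_left (pow_pos hp.pos 2) (by rwa [mul_one])
  rw [ha, Nat.eq_one_of_mul_eq_one_right (Nat.dvd_one.1 hab), mul_one]

/-- At most two prime ideals of a quadratic field lie above a rational prime. -/
theorem eq_or_eq_of_natCast_mem (hK : Module.finrank ℚ K = 2) {p : ℕ} (hp : p.Prime)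
    {P Q R : Ideal (𝓞 K)} (hP : Prime P) (hQ : Prime Q) (hR : Prime R) (hpP : (p : 𝓞 K) ∈ P)
    (hpQ : (p : 𝓞 K) ∈ Q) (hpR : (p : 𝓞 K) ∈ R) (hne : P ≠ Q) : R = P ∨ R = Q := by
  by_contra! h
  have hdvd : P * Q * R ∣ Ideal.span {(p : 𝓞 K)} := by
    refine mul_dvd_of_prime_of_not_dvd hR ?_
      (mul_dvd_of_prime_of_not_dvd hQ (not_prime_dvd_prime_of_ne hQ hP hne.symm)
        (Ideal.dvd_span_singleton.2 hpP) (Ideal.dvd_span_singleton.2 hpQ))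
      (Ideal.dvd_span_singleton.2 hpR)
    rw [hR.dvd_mul]
    rintro (h' | h')
    · exact not_prime_dvd_prime_of_ne hR hP h.1 h'
    · exact not_prime_dvd_prime_of_ne hR hQ h.2 h'
  have hN := map_dvd Ideal.absNorm hdvd
  rw [map_mul, map_mul, absNorm_span_natCast_of_finrank_eq_two hK,
    absNorm_eq_of_natCast_mem_of_ne hK hp hP hQ hpP hpQ hne,
    absNorm_eq_of_natCast_mem_of_ne hK hp hQ hP hpQ hpP hne.symm,
    absNorm_eq_of_natCast_mem_of_ne hK hp hR hP hpR hpP h.1,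
    show p * p * p = p ^ 3 by ring, Nat.pow_dvd_pow_iff_le_right hp.one_lt] at hN
  omega

open scoped Classical in
/-- If `P ≠ Q` are the primes above `p`, the `p`-adic valuation of the norm of an ideal is the sum
of its valuations at `P` and `Q`. -/
theorem factorization_absNorm_eq_count_add_count (hK : Module.finrank ℚ K = 2) {p : ℕ}
    (hp : p.Prime) {P Q : Ideal (𝓞 K)} (hP : Prime P) (hQ : Prime Q) (hpP : (p : 𝓞 K) ∈ P)
    (hpQ : (p : 𝓞 K) ∈ Q) (hne : P ≠ Q) {I : Ideal (𝓞 K)} (hI : I ≠ 0) :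
    (Ideal.absNorm I).factorization p =
      (normalizedFactors I).count P + (normalizedFactors I).count Q := by
  induction I using induction_on_prime with
  | h₁ => exact absurd rfl hI
  | h₂ x hx =>
    rw [normalizedFactors_of_isUnit hx, Ideal.isUnit_iff.1 hx]
    simp
  | h₃ J R hJ hR ih =>
    have hNR : Ideal.absNorm R ≠ 0 := by simpa [Ideal.absNorm_eq_zero_iff] using hR.ne_zero
    have hNJ : Ideal.absNorm J ≠ 0 := by simpa [Ideal.absNorm_eq_zero_iff] using hJ
    rw [map_mul, Nat.factorization_mul hNR hNJ, Finsupp.add_apply, ih hJ,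
      normalizedFactors_mul hR.ne_zero hJ, normalizedFactors_irreducible hR.irreducible,
      normalize_eq, Multiset.count_add, Multiset.count_add, Multiset.count_singleton,
      Multiset.count_singleton]
    suffices (Ideal.absNorm R).factorization p =
        (if P = R then 1 else 0) + (if Q = R then 1 else 0) by omega
    rcases eq_or_ne P R with rfl | hPR
    · rw [absNorm_eq_of_natCast_mem_of_ne hK hp hP hQ hpP hpQ hne]
      simp [hne.symm, hp.factorization_self]
    rcases eq_or_ne Q R with rfl | hQR
    · rw [absNorm_eq_of_natCast_mem_of_ne hK hp hQ hP hpQ hpP hne.symm]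
      simp [hne, hp.factorization_self]
    rw [if_neg hPR, if_neg hQR]
    refine Nat.factorization_eq_zero_of_not_dvd fun h => ?_
    rcases eq_or_eq_of_natCast_mem hK hp hP hQ hR hpP hpQ
      (natCast_mem_of_prime_dvd_absNorm hp hR h) hne with h' | h'
    · exact hPR h'.symm
    · exact hQR h'.symm

theorem exists_prime_ideal_natCast_mem (hK : Module.finrank ℚ K = 2) {p : ℕ} (hp : p.Prime) :
    ∃ P : Ideal (𝓞 K), Prime P ∧ (p : 𝓞 K) ∈ P := by
  have hne : Ideal.span {(p : 𝓞 K)} ≠ ⊤ := by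
    rw [Ne, ← Ideal.absNorm_eq_one_iff, absNorm_span_natCast_of_finrank_eq_two hK]
    simpa using hp.ne_one
  obtain ⟨P, hP, hle⟩ := Ideal.exists_le_maximal _ hne
  have hpP := (Ideal.span_singleton_le_iff_mem _).1 hle
  refine ⟨P, Ideal.prime_of_isPrime ?_ hP.isPrime, hpP⟩
  rintro rfl
  exact hp.ne_zero (by simpa using hpP)

open scoped Classical in
theorem count_normalizedFactors_le_factorization_absNorm (hK : Module.finrank ℚ K = 2) {p : ℕ}
    (hp : p.Prime) {P : Ideal (𝓞 K)} (hP : Prime P) (hpP : (p : 𝓞 K) ∈ P)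
    {I : Ideal (𝓞 K)} (hI : I ≠ 0) :
    (normalizedFactors I).count P ≤ (Ideal.absNorm I).factorization p := by
  have hNI : Ideal.absNorm I ≠ 0 := by simpa [Ideal.absNorm_eq_zero_iff] using hI
  have hdvd : P ^ (normalizedFactors I).count P ∣ I := by
    rw [pow_dvd_iff_le_emultiplicity, emultiplicity_eq_count_normalizedFactors hP.irreducible hI,
      normalize_eq]
  rw [← hp.pow_dvd_iff_le_factorization hNI]
  refine (pow_dvd_pow_of_dvd (prime_dvd_absNorm_of_natCast_mem hK hp hP hpP) _).trans ?_
  rw [← map_pow]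
  exact map_dvd Ideal.absNorm hdvd

/-- A quadratic field has at most `τ(n)` integral ideals of norm `n`. -/
theorem ncard_absNorm_eq_le_card_divisors (hK : Module.finrank ℚ K = 2) {n : ℕ} (hn : n ≠ 0) :
    {I : Ideal (𝓞 K) | Ideal.absNorm I = n}.ncard ≤ n.divisors.card := by
  classical
  have hex : ∀ p : ℕ, ∃ P : Ideal (𝓞 K), p.Prime → Prime P ∧ (p : 𝓞 K) ∈ P := fun p => by
    by_cases hp : p.Prime
    · obtain ⟨P, hP⟩ := exists_prime_ideal_natCast_mem hK hp
      exact ⟨P, fun _ => hP⟩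
    · exact ⟨0, fun h => absurd h hp⟩
  choose P hP using hex
  have hne : ∀ I : Ideal (𝓞 K), Ideal.absNorm I = n → I ≠ 0 := by
    rintro I h rfl
    exact hn (by simpa using h.symm)
  let T : Finset (∀ p ∈ n.primeFactors, ℕ) :=
    n.primeFactors.pi fun p => Finset.range (n.factorization p + 1)
  have hT : T.card = n.divisors.card := by
    rw [Nat.card_divisors hn, Finset.card_pi]
    simp
  rw [← hT, ← Set.ncard_coe_finset]
  refine Set.ncard_le_ncard_of_injOn
    (fun I p _ => (normalizedFactors I).count (P p)) ?_ ?_ T.finite_toSet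
  · intro I hI
    simp only [T, Finset.mem_coe, Finset.mem_pi, Finset.mem_range, Nat.lt_succ_iff]
    intro p hp
    have hp' := Nat.prime_of_mem_primeFactors hp
    have := count_normalizedFactors_le_factorization_absNorm hK hp' (hP p hp').1 (hP p hp').2
      (hne I hI)
    rwa [show Ideal.absNorm I = n from hI] at this
  · intro I hI J hJ hIJ
    have hI0 := hne I hI
    have hJ0 := hne J hJ
    replace hI : Ideal.absNorm I = n := hI
    replace hJ : Ideal.absNorm J = n := hJ
    rw [← Ideal.prod_normalizedFactors_eq_self hI0, ← Ideal.prod_normalizedFactors_eq_self hJ0]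
    congr 1
    ext Q
    by_cases hQ : Prime Q
    swap
    · rw [Multiset.count_eq_zero_of_notMem fun h => hQ (prime_of_normalized_factor Q h),
        Multiset.count_eq_zero_of_notMem fun h => hQ (prime_of_normalized_factor Q h)]
    have hmax : Q.IsMaximal := (Ideal.isPrime_of_prime hQ).isMaximal hQ.ne_zero
    obtain ⟨p, -, -, hpQ, hp, -⟩ := Ideal.exists_prime_and_absNorm_eq_pow Q
    have hcount : (normalizedFactors I).count (P p) = (normalizedFactors J).count (P p) := by
      by_cases hpn : p ∈ n.primeFactors
      · exact congrFun (congrFun hIJ p) hpn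
      · have h0 : n.factorization p = 0 := by
          rwa [← Finsupp.notMem_support_iff, Nat.support_factorization]
        have h1 := count_normalizedFactors_le_factorization_absNorm hK hp (hP p hp).1
          (hP p hp).2 hI0
        have h2 := count_normalizedFactors_le_factorization_absNorm hK hp (hP p hp).1
          (hP p hp).2 hJ0
        rw [hI] at h1
        rw [hJ] at h2
        omega
    rcases eq_or_ne (P p) Q with rfl | hPQ
    · exact hcount
    have h1 := factorization_absNorm_eq_count_add_count hK hp (hP p hp).1 hQ (hP p hp).2 hpQ hPQ
      hI0
    have h2 := factorization_absNorm_eq_count_add_count hK hp (hP p hp).1 hQ (hP p hp).2 hpQ hPQ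
      hJ0
    rw [hI] at h1
    rw [hJ] at h2
    omega

theorem sum_card_divisors_le (N : ℕ) :
    ((∑ n ∈ Finset.Ioc 0 N, n.divisors.card : ℕ) : ℝ) ≤ N * (1 + Real.log N) := by
  have h : ∑ n ∈ Finset.Ioc 0 N, n.divisors.card = ∑ n ∈ Finset.Ioc 0 N, N / n := by
    simpa [ArithmeticFunction.sigma_zero_apply] using
      ArithmeticFunction.sum_Ioc_sigma0_eq_sum_div N
  have hH : ((harmonic N : ℚ) : ℝ) = ∑ n ∈ Finset.Ioc 0 N, (n : ℝ)⁻¹ := by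
    rw [harmonic_eq_sum_Icc]
    push_cast
    rfl
  calc ((∑ n ∈ Finset.Ioc 0 N, n.divisors.card : ℕ) : ℝ)
      ≤ ∑ n ∈ Finset.Ioc 0 N, (N : ℝ) * (n : ℝ)⁻¹ := by
        rw [h]
        push_cast
        exact Finset.sum_le_sum fun n _ => Nat.cast_div_le.trans (div_eq_mul_inv _ _).le
    _ = N * (harmonic N : ℚ) := by rw [hH, Finset.mul_sum]
    _ ≤ N * (1 + Real.log N) := by gcongr; exact harmonic_le_one_add_log N

/-- The Minkowski bound for a quadratic field, with the larger (imaginary) constant. -/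
theorem exists_ideal_in_class_absNorm_le (hK : Module.finrank ℚ K = 2) (C : ClassGroup (𝓞 K)) :
    ∃ I : (Ideal (𝓞 K))⁰, ClassGroup.mk0 I = C ∧
      (Ideal.absNorm (I : Ideal (𝓞 K)) : ℝ) ≤ 2 / π * √|(discr K : ℝ)| := by
  obtain ⟨I, hIC, hI⟩ := exists_ideal_in_class_of_norm_le C
  refine ⟨I, hIC, hI.trans ?_⟩
  have hr := InfinitePlace.card_add_two_mul_card_eq_rank K
  rw [hK] at hr ⊢
  have hpow : (4 / π) ^ InfinitePlace.nrComplexPlaces K ≤ 4 / π := by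
    have h4 : 1 ≤ 4 / π := (one_le_div pi_pos).2 pi_le_four
    simpa using pow_le_pow_right₀ h4 (show InfinitePlace.nrComplexPlaces K ≤ 1 by omega)
  calc _ ≤ 4 / π * ((Nat.factorial 2 : ℝ) / (2 : ℕ) ^ 2 * √|(discr K : ℝ)|) := by gcongr
    _ = 2 / π * √|(discr K : ℝ)| := by norm_num [Nat.factorial]; ring

/-- The class number of a quadratic field with Minkowski bound at most `M` is at most
`M (1 + log M)`. -/
theorem classNumber_le_mul_one_add_log (hK : Module.finrank ℚ K = 2) {M : ℝ} (hM1 : 1 ≤ M)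
    (hM : 2 / π * √|(discr K : ℝ)| ≤ M) :
    (classNumber K : ℝ) ≤ M * (1 + Real.log M) := by
  classical
  choose f hf hfM using exists_ideal_in_class_absNorm_le hK
  set N := ⌊M⌋₊
  have hfin : ∀ n : ℕ, {I : Ideal (𝓞 K) | Ideal.absNorm I = n}.Finite :=
    Ideal.finite_setOfPred_absNorm_eq
  let S : Finset (Ideal (𝓞 K)) := (Finset.Ioc 0 N).biUnion fun n => (hfin n).toFinset
  have hcard : classNumber K ≤ S.card := by
    rw [classNumber, ← Finset.card_univ]
    refine Finset.card_le_card_of_injOn (fun C => (f C : Ideal (𝓞 K))) ?_ ?_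
    · intro C _
      simp only [S, Finset.coe_biUnion, Set.mem_iUnion]
      refine ⟨Ideal.absNorm (f C : Ideal (𝓞 K)), ?_, by simp⟩
      rw [Finset.mem_coe, Finset.mem_Ioc]
      exact ⟨Ideal.absNorm_pos_of_nonZeroDivisors _, Nat.le_floor ((hfM C).trans hM)⟩
    · intro C _ C' _ h
      rw [← hf C, ← hf C', Subtype.ext h]
  have hS : S.card ≤ ∑ n ∈ Finset.Ioc 0 N, n.divisors.card := by
    refine Finset.card_biUnion_le.trans (Finset.sum_le_sum fun n hn => ?_)
    rw [← Set.ncard_eq_toFinset_card _ (hfin n)]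
    exact ncard_absNorm_eq_le_card_divisors hK (Finset.mem_Ioc.1 hn).1.ne'
  have hN1 : 1 ≤ N := Nat.le_floor (by simpa using hM1)
  have hNM : (N : ℝ) ≤ M := Nat.floor_le (by linarith)
  have hN1' : (1 : ℝ) ≤ N := by exact_mod_cast hN1
  calc (classNumber K : ℝ) ≤ (∑ n ∈ Finset.Ioc 0 N, n.divisors.card : ℕ) := by
        exact_mod_cast hcard.trans hS
    _ ≤ N * (1 + Real.log N) := sum_card_divisors_le N
    _ ≤ M * (1 + Real.log M) := by
        have := Real.log_nonneg hN1'
        gcongr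

end QuadraticIdeals

/-- **Lemma (class number of `ℚ(√(kd))`).** Let `d < 0` be a fundamental discriminant
with `|d| ≥ 9.8·10^18`, and let `q₁, q₂` be distinct odd primes not dividing `d` with
`k = q₁·q₂ ≡ 1 (mod 4)` and `k ≤ 1.62·(log |d|)²`. Then the class number of the
imaginary quadratic field `ℚ(√(kd))` (of discriminant `k·d`) is at most
`1.01·√|d|·(log |d|)²`. -/
theorem class_number_kd_bound
    (d : ℤ) (hd : d < 0)
    (K : Type*) [Field K] [NumberField K]
    (hdeg : Module.finrank ℚ K = 2)
    (hdisc : NumberField.discr K = d)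
    (hsize : (|d| : ℝ) ≥ 9.8e18)
    (q₁ q₂ : ℕ) (hq₁ : q₁.Prime) (hq₂ : q₂.Prime)
    (hodd₁ : Odd q₁) (hodd₂ : Odd q₂) (hne : q₁ ≠ q₂)
    (hnd₁ : ¬ ((q₁ : ℤ) ∣ d)) (hnd₂ : ¬ ((q₂ : ℤ) ∣ d))
    (k : ℕ) (hk : k = q₁ * q₂) (hk4 : k % 4 = 1)
    (hksize : (k : ℝ) ≤ 1.62 * (Real.log |(d : ℝ)|) ^ 2)
    (K' : Type*) [Field K'] [NumberField K']
    (hdeg' : Module.finrank ℚ K' = 2)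
    (hdisc' : NumberField.discr K' = (k : ℤ) * d) :
    (NumberField.classNumber K' : ℝ) ≤
      1.01 * Real.sqrt |(d : ℝ)| * (Real.log |(d : ℝ)|) ^ 2 := by
  set x : ℝ := |(d : ℝ)| with hx
  set L : ℝ := Real.log x with hL
  have hx0 : 0 < x := by linarith
  have hL5 : 5 ≤ L := by
    rw [hL, Real.le_log_iff_exp_le hx0]
    calc Real.exp 5 = Real.exp 1 ^ 5 := by rw [← Real.exp_nat_mul]; norm_num
      _ ≤ 3 ^ 5 := by gcongr; linarith [Real.exp_one_lt_d9]
      _ ≤ x := by linarith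
  have hsqrt1 : 1 ≤ √x := Real.one_le_sqrt.2 (by linarith)
  have hsqrtk : √(k : ℝ) ≤ 1.273 * L := by
    rw [Real.sqrt_le_left (by positivity)]
    nlinarith
  have hpi : 2 / π ≤ 0.637 := by
    rw [div_le_iff₀ pi_pos]
    linarith [pi_gt_d4]
  have hM : 2 / π * √|(discr K' : ℝ)| ≤ 0.811 * L * √x := by
    have hdiscr : |(discr K' : ℝ)| = k * x := by
      rw [hdisc', hx]
      push_cast
      rw [abs_mul, Nat.abs_cast]
    rw [hdiscr, Real.sqrt_mul (Nat.cast_nonneg k)]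
    calc 2 / π * (√(k : ℝ) * √x) ≤ 0.637 * ((1.273 * L) * √x) := by gcongr
      _ ≤ 0.811 * L * √x := by nlinarith [mul_nonneg (by linarith : 0 ≤ L) (Real.sqrt_nonneg x)]
  have hM1 : 1 ≤ 0.811 * L * √x := by nlinarith
  refine (classNumber_le_mul_one_add_log hdeg' hM1 hM).trans ?_
  have hlog : Real.log (0.811 * L * √x) ≤ L := by
    rw [Real.log_mul (by positivity) (by positivity), Real.log_sqrt hx0.le, ← hL]
    have h := Real.log_le_sub_one_of_pos (show 0 < 0.811 * L / 2 by positivity)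
    rw [Real.log_div (by positivity) two_ne_zero] at h
    linarith [Real.log_two_lt_d9]
  calc 0.811 * L * √x * (1 + Real.log (0.811 * L * √x))
      ≤ 0.811 * L * √x * (1.2 * L) := by gcongr; linarith
    _ ≤ 1.01 * √x * L ^ 2 := by nlinarith [mul_nonneg (Real.sqrt_nonneg x) (sq_nonneg L)]
end
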